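/- arXiv:1211.4818 — 4 statements merged into one kernel-verified Lean document; each statement's English description precedes it below -/
import Mathlib

section
/- Assume condition (D1) (A is increasing on [0,1]) and let F₀ and G₀ be cumulative distribution functions of probability measures on ℝ with finite first moments. Let F and G be the unique weak solutions in 𝓕 of the Cauchy problem with respective initial conditions F₀ and G₀. Let p ≥ 1. If W_p(F₀,G₀) = +∞, then W_p(F_t,G_t) = +∞ for all t ≥ 0. -/
open MeasureTheory Set Filter Topology Function
open scoped ENNReal

noncomputable section

/-- `primitive f u = ∫₀^u f(v) dv`. -/
def primitive (f : ℝ → ℝ) : ℝ → ℝ := fun u => ∫ v in (0:ℝ)..u, f v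

/-- The cumulative distribution function `H * μ` of a measure `μ` on `ℝ`. -/
def cdfOf (μ : MeasureTheory.Measure ℝ) : ℝ → ℝ := fun x => (μ (Set.Iic x)).toReal

/-- Pseudo-inverse of a cdf: `F⁻¹(u) = inf {x | F x > u}`. -/
def pinv (F : ℝ → ℝ) (u : ℝ) : ℝ := sInf {x : ℝ | u < F x}

/-- Wasserstein distance of order `p` between two cdfs, as an element of `[0,∞]`:
`W_p(F,G) = (∫₀¹ |F⁻¹(u) - G⁻¹(u)|^p du)^(1/p)`. -/
def Wdist (p : ℝ) (F G : ℝ → ℝ) : ℝ≥0∞ :=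
  (∫⁻ u in Set.Ioo (0:ℝ) 1, ENNReal.ofReal (|pinv F u - pinv G u| ^ p)) ^ (1/p)

/-- `F` is a weak solution of `∂ₜ F = (1/2) ∂ₓₓ (A (F)) - ∂ₓ (B (F))` with
initial condition `F₀`. -/
def IsWeakSolution (A B : ℝ → ℝ) (F₀ : ℝ → ℝ) (F : ℝ → ℝ → ℝ) : Prop :=
  ∀ g : ℝ → ℝ → ℝ, ContDiff ℝ (⊤ : ℕ∞) (Function.uncurry g) →
    HasCompactSupport (Function.uncurry g) →
    ∀ t : ℝ, 0 ≤ t →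
      ((∫ x : ℝ, g t x * F t x) - ∫ x : ℝ, g 0 x * F₀ x) =
        ∫ x : ℝ, ∫ s in (0:ℝ)..t,
          ((1/2) * A (F s x) * deriv (deriv (fun y => g s y)) x
            + B (F s x) * deriv (fun y => g s y) x
            + F s x * deriv (fun r => g r x) s)

/-- Membership in the class `𝓕`. -/
def MemF (F : ℝ → ℝ → ℝ) : Prop :=
  ∃ P : ℝ → ProbabilityMeasure ℝ,
    ContinuousOn P (Set.Ici 0) ∧
    (∀ t : ℝ, 0 ≤ t → Integrable (fun x => |x|) (P t : Measure ℝ)) ∧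
    (∀ T : ℝ, 0 < T → IntegrableOn (fun t => ∫ x, |x| ∂(P t : Measure ℝ)) (Set.Icc 0 T)) ∧
    (∀ t : ℝ, 0 ≤ t → ∀ x : ℝ, F t x = ((P t : Measure ℝ) (Set.Iic x)).toReal)


/-- The integral of the derivative over an upper set. -/
lemma upper_int (S : Set ℝ) (hS : IsUpperSet S) (w : ℝ → ℝ) (hw : ContDiff ℝ 1 w)
    (hc : HasCompactSupport w) (ε : ℝ) (hε : 0 ≤ ε) (hwε : ∀ x, -ε ≤ w x) :
    ∫ x in S, deriv w x ≤ ε := by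
  rcases S.eq_empty_or_nonempty with h | hne
  · simp [h, hε]
  by_cases hb : BddBelow S
  · have h1 : Ioi (sInf S) ⊆ S := by
      intro x hx
      obtain ⟨y, hy, hyx⟩ := exists_lt_of_csInf_lt hne hx
      exact hS hyx.le hy
    have h2 : S ⊆ Ici (sInf S) := fun x hx => csInf_le hb hx
    have h3 : S =ᵐ[volume] Ioi (sInf S) := by
      refine Filter.EventuallyLE.antisymm ?_ ?_
      · exact (LE.le.eventuallyLE h2).trans Ioi_ae_eq_Ici.symm.le
      · exact (LE.le.eventuallyLE h1)
    rw [setIntegral_congr_set h3, HasCompactSupport.integral_Ioi_deriv_eq hw hc]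
    linarith [hwε (sInf S)]
  · have : S = univ := by
      ext x
      simp only [mem_univ, iff_true]
      rw [not_bddBelow_iff] at hb
      obtain ⟨y, hy, hyx⟩ := hb x
      exact hS hyx.le hy
    rw [this, setIntegral_univ, integral_eq_zero_of_hasDerivAt_of_integrable
      (fun x => (hw.differentiable one_ne_zero x).hasDerivAt)
      ((hw.continuous_deriv le_rfl).integrable_of_hasCompactSupport hc.deriv)
      (hw.continuous.integrable_of_hasCompactSupport hc)]
    exact hε

lemma ibp (Θ : ℝ → ℝ) (hΘ : Monotone Θ) (M : ℝ) (h0 : ∀ x, 0 ≤ Θ x) (hM : ∀ x, Θ x ≤ M)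
    (w : ℝ → ℝ) (hw : ContDiff ℝ 1 w) (hc : HasCompactSupport w) (ε : ℝ) (hε : 0 ≤ ε)
    (hwε : ∀ x, -ε ≤ w x) : ∫ x, Θ x * deriv w x ≤ ε * M := by
  have hM0 : 0 ≤ M := (h0 0).trans (hM 0)
  have hw_integrable : Integrable (deriv w) := 
    (hw.continuous_deriv le_rfl).integrable_of_hasCompactSupport hc.deriv
  have hset : MeasurableSet {q : ℝ × ℝ | q.2 < Θ q.1} :=
    measurableSet_lt measurable_snd (hΘ.measurable.comp measurable_fst)
  have key : ∀ x, Θ x * deriv w x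
      = ∫ u in Ioc 0 M, {q : ℝ × ℝ | q.2 < Θ q.1}.indicator (fun q => deriv w q.1) (x, u) := by
    intro x
    have : ∀ u, {q : ℝ × ℝ | q.2 < Θ q.1}.indicator (fun q => deriv w q.1) (x, u)
        = (Iio (Θ x)).indicator (fun _ => deriv w x) u := by
      intro u; simp [indicator]
    simp_rw [this]
    rw [integral_indicator measurableSet_Iio, Measure.restrict_restrict measurableSet_Iio]
    have h2 : volume.real (Iio (Θ x) ∩ Ioc 0 M) = Θ x := by
      have : Iio (Θ x) ∩ Ioc 0 M = Ioo 0 (Θ x) := by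
        ext u; simp; constructor
        · rintro ⟨a, b, c⟩; exact ⟨b, a⟩
        · rintro ⟨a, b⟩; exact ⟨b, a, b.le.trans (hM x)⟩
      rw [this]; simp [h0 x]
    simp [h2]
  simp_rw [key]
  rw [integral_integral_swap]
  · have : ∀ u, ∫ x, {q : ℝ × ℝ | q.2 < Θ q.1}.indicator (fun q => deriv w q.1) (x, u) ≤ ε := by
      intro u
      have h1 : ∀ x, {q : ℝ × ℝ | q.2 < Θ q.1}.indicator (fun q => deriv w q.1) (x, u)
        = ({x | u < Θ x}).indicator (fun x => deriv w x) x := by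
        intro x; simp [indicator]
      simp_rw [h1]
      rw [integral_indicator (measurableSet_lt measurable_const hΘ.measurable)]
      exact upper_int _ (fun a b hab ha => lt_of_lt_of_le ha (hΘ hab)) w hw hc ε hε hwε
    by_cases hi : IntegrableOn (fun u => ∫ x, {q : ℝ × ℝ | q.2 < Θ q.1}.indicator (fun q => deriv w q.1) (x, u)) (Ioc 0 M)
    · calc _ ≤ ∫ u in Ioc 0 M, ε := integral_mono hi (integrable_const _) this
        _ = ε * M := by simp [hM0, mul_comm]
    · rw [integral_undef hi]; positivity
  · have : Integrable (fun q : ℝ × ℝ => deriv w q.1) (volume.prod (volume.restrict (Ioc 0 M))) :=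
      Integrable.comp_fst hw_integrable _
    exact this.indicator hset

lemma meas_F (P : ℝ → ProbabilityMeasure ℝ) (hP : Continuous P) :
    Measurable (fun q : ℝ × ℝ => ((P q.1 : Measure ℝ) (Iic q.2)).toReal) := by
  have hm : Measurable (fun s => (P s : Measure ℝ)) := by
    refine Measurable.measure_of_isPiSystem_of_isProbabilityMeasure
      (borel_eq_generateFrom_Iic ℝ) isPiSystem_Iic ?_
    rintro _ ⟨x, rfl⟩
    have hpos : ∀ n : ℕ, (0:ℝ) < 1 / ((n:ℝ) + 1) := fun n => by positivity
    refine measurable_of_tendsto_metrizable (f := fun (n : ℕ) s =>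
      ∫⁻ z, (thickenedIndicator (hpos n) (Iic x) z : ℝ≥0∞) ∂(P s : Measure ℝ)) ?_ ?_
    · intro n
      refine Continuous.measurable ?_
      rw [continuous_iff_continuousAt]
      intro s
      exact (ProbabilityMeasure.tendsto_iff_forall_lintegral_tendsto.1 hP.continuousAt) _
    · rw [tendsto_pi_nhds]
      intro s
      exact tendsto_lintegral_thickenedIndicator_of_isClosed _ isClosed_Iic hpos
        tendsto_one_div_add_atTop_nhds_zero_nat
  let κ : ProbabilityTheory.Kernel ℝ ℝ := ⟨fun s => (P s : Measure ℝ), hm⟩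
  have : ProbabilityTheory.IsMarkovKernel κ := ⟨fun s => by
    change IsProbabilityMeasure (P s : Measure ℝ); infer_instance⟩
  let κ' : ProbabilityTheory.Kernel (ℝ × ℝ) ℝ := κ.comap Prod.fst measurable_fst
  have hset : MeasurableSet {q : (ℝ × ℝ) × ℝ | q.2 ≤ q.1.2} :=
    measurableSet_le measurable_snd (measurable_snd.comp measurable_fst)
  have := ProbabilityTheory.Kernel.measurable_kernel_prodMk_left (κ := κ') hset
  exact this.ennreal_toReal

noncomputable def kR (R r : ℝ) : ℝ :=
  Real.exp r * Real.smoothTransition (-r) * Real.smoothTransition (r + R)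

noncomputable def kI (r : ℝ) : ℝ := Real.exp r * Real.smoothTransition (-r)

lemma sT_deriv_bound : ∃ C, 0 ≤ C ∧ ∀ x, deriv Real.smoothTransition x ≤ C := by
  have hcd : ContDiff ℝ 1 Real.smoothTransition := Real.smoothTransition.contDiff (n := 1)
  have hc : HasCompactSupport (deriv Real.smoothTransition) := by
    refine HasCompactSupport.intro (isCompact_Icc (a := (0:ℝ)) (b := 1)) ?_
    intro x hx
    by_cases h : x < 0
    · have : Real.smoothTransition =ᶠ[𝓝 x] fun _ => 0 := by
        filter_upwards [Iio_mem_nhds h] with y hy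
        exact Real.smoothTransition.zero_of_nonpos (le_of_lt hy)
      rw [this.deriv_eq]; simp
    · have h1 : 1 < x := by
        by_contra h2
        exact hx ⟨not_lt.1 h, not_lt.1 h2⟩
      have : Real.smoothTransition =ᶠ[𝓝 x] fun _ => 1 := by
        filter_upwards [Ioi_mem_nhds h1] with y hy
        exact Real.smoothTransition.one_of_one_le (le_of_lt hy)
      rw [this.deriv_eq]; simp
  obtain ⟨C, hC⟩ := hc.exists_bound_of_continuous (hcd.continuous_deriv le_rfl)
  exact ⟨C, (norm_nonneg _).trans (hC 0), fun x => (le_abs_self _).trans (hC x)⟩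

lemma sT_deriv_zero (x : ℝ) (h1 : 1 < x) : deriv Real.smoothTransition x = 0 := by
  have : Real.smoothTransition =ᶠ[𝓝 x] fun _ => 1 := by
    filter_upwards [Ioi_mem_nhds h1] with y hy
    exact Real.smoothTransition.one_of_one_le (le_of_lt hy)
  rw [this.deriv_eq]; simp

lemma kR_contDiff (R : ℝ) : ContDiff ℝ (⊤ : ℕ∞) (kR R) := by
  have h : ContDiff ℝ (⊤ : ℕ∞) Real.smoothTransition := Real.smoothTransition.contDiff
  unfold kR
  exact (Real.contDiff_exp.mul (h.comp contDiff_neg)).mul (h.comp (contDiff_id.add contDiff_const))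

lemma kR_compact (R : ℝ) : HasCompactSupport (kR R) := by
  refine HasCompactSupport.intro (isCompact_Icc (a := -R) (b := 0)) ?_
  intro x hx
  unfold kR
  by_cases h : x < -R
  · rw [Real.smoothTransition.zero_of_nonpos (x := x + R) (by linarith)]; simp
  · have : 0 < x := by
      by_contra h2
      exact hx ⟨not_lt.1 h, not_lt.1 h2⟩
    rw [Real.smoothTransition.zero_of_nonpos (x := -x) (by linarith)]; simp

lemma kR_nonneg (R r : ℝ) : 0 ≤ kR R r :=
  mul_nonneg (mul_nonneg (Real.exp_pos r).le (Real.smoothTransition.nonneg _))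
    (Real.smoothTransition.nonneg _)

lemma kI_nonneg (r : ℝ) : 0 ≤ kI r :=
  mul_nonneg (Real.exp_pos r).le (Real.smoothTransition.nonneg _)

lemma kR_le (R r : ℝ) : kR R r ≤ kI r :=
  mul_le_of_le_one_right (kI_nonneg r) (Real.smoothTransition.le_one _)

lemma kI_le (r : ℝ) : kI r ≤ Real.exp r :=
  mul_le_of_le_one_right (Real.exp_pos r).le (Real.smoothTransition.le_one _)

lemma kI_zero {r : ℝ} (h : 0 ≤ r) : kI r = 0 := by
  unfold kI; rw [Real.smoothTransition.zero_of_nonpos (by linarith)]; simp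

lemma kI_cont : Continuous kI := by
  unfold kI
  exact Real.continuous_exp.mul (Real.smoothTransition.continuous.comp continuous_neg)

lemma kI_integrable : Integrable kI := by
  have h1 : IntegrableOn kI (Iic 0) := by
    refine Integrable.mono' (integrableOn_exp_Iic 0) kI_cont.aestronglyMeasurable ?_
    filter_upwards with x
    rw [Real.norm_of_nonneg (kI_nonneg x)]; exact kI_le x
  have h2 : IntegrableOn kI (Ioi 0) := by
    refine (integrableOn_zero).congr_fun (fun x hx => ?_) measurableSet_Ioi
    exact (kI_zero (le_of_lt hx)).symm
  have := h1.union h2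
  rwa [Iic_union_Ioi, integrableOn_univ] at this

lemma kI_pos : 0 < ∫ r, kI r := by
  rw [integral_pos_iff_support_of_nonneg kI_nonneg kI_integrable]
  refine lt_of_lt_of_le ?_ (measure_mono (s := Iio 0) ?_)
  · simp
  · intro x hx
    have hx' : x < 0 := hx
    exact (mul_pos (Real.exp_pos x) (Real.smoothTransition.pos_of_pos (by linarith))).ne'

lemma kR_deriv : ∃ C, 0 ≤ C ∧ ∀ R r, deriv (kR R) r ≤ kR R r + C * Real.exp (-R) := by
  obtain ⟨C, hC0, hC⟩ := sT_deriv_bound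
  refine ⟨C * Real.exp 1, by positivity, fun R r => ?_⟩
  have hcd : Differentiable ℝ Real.smoothTransition :=
    (Real.smoothTransition.contDiff (n := 1)).differentiable one_ne_zero
  have hd1 : HasDerivAt (fun r => Real.smoothTransition (-r))
      (deriv Real.smoothTransition (-r) * (-1)) r :=
    HasDerivAt.comp r (hcd (-r)).hasDerivAt (hasDerivAt_neg r)
  have hd2 : HasDerivAt (fun r => Real.smoothTransition (r + R))
      (deriv Real.smoothTransition (r + R) * 1) r :=
    HasDerivAt.comp (h := fun r => r + R) r (hcd (r + R)).hasDerivAt ((hasDerivAt_id r).add_const R)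
  have hd := ((Real.hasDerivAt_exp r).mul hd1).mul hd2
  have hd' : deriv (kR R) r = _ := hd.deriv
  rw [hd']
  have m1 := (Real.smoothTransition.monotone).deriv_nonneg (x := -r)
  have m2 := (Real.smoothTransition.monotone).deriv_nonneg (x := r + R)
  have p1 := Real.smoothTransition.nonneg (-r)
  have p2 := Real.smoothTransition.nonneg (r + R)
  have q1 := Real.smoothTransition.le_one (-r)
  have e := Real.exp_pos r
  have key : Real.exp r * Real.smoothTransition (-r) * deriv Real.smoothTransition (r + R)
      ≤ C * Real.exp 1 * Real.exp (-R) := by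
    by_cases h : 1 < r + R
    · rw [sT_deriv_zero _ h]; simp; positivity
    · have : Real.exp r ≤ Real.exp 1 * Real.exp (-R) := by
        rw [← Real.exp_add]; apply Real.exp_le_exp.2; linarith
      calc _ ≤ (Real.exp 1 * Real.exp (-R)) * 1 * C := by
            gcongr
            exact hC _
        _ = _ := by ring
  have key2 : 0 ≤ Real.exp r * deriv Real.smoothTransition (-r) * Real.smoothTransition (r + R) := by
    positivity
  simp only [Pi.mul_apply]
  unfold kR
  nlinarith

lemma kR_tendsto (r : ℝ) : Tendsto (fun n : ℕ => kR n r) atTop (𝓝 (kI r)) := by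
  refine tendsto_const_nhds.congr' ?_
  filter_upwards [eventually_ge_atTop (⌈1 - r⌉₊)] with n hn
  have : 1 - r ≤ n := (Nat.le_ceil _).trans (by exact_mod_cast hn)
  unfold kR kI
  rw [Real.smoothTransition.one_of_one_le (x := r + n) (by linarith)]; simp

lemma shear_int (μ : Measure ℝ) [IsFiniteMeasure μ] (ψ : ℝ → ℝ) (hψ : Continuous ψ)
    (hc : HasCompactSupport ψ) (d : ℝ → ℝ) (hd : Continuous d) :
    Integrable (fun q : ℝ × ℝ => ψ (q.2 - d q.1)) (μ.prod volume) := by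
  have hi : Integrable ψ := hψ.integrable_of_hasCompactSupport hc
  rw [integrable_prod_iff (by
    exact (hψ.comp (continuous_snd.sub (hd.comp continuous_fst))).aestronglyMeasurable)]
  refine ⟨Eventually.of_forall fun s => hi.comp_sub_right (d s), ?_⟩
  have : ∀ s, ∫ x, ‖ψ (x - d s)‖ = ∫ x, ‖ψ x‖ := fun s =>
    integral_sub_right_eq_self (fun x => ‖ψ x‖) (d s)
  simp only [this]
  exact integrable_const _

lemma core (A B : ℝ → ℝ) (hA : Continuous A) (hB : Continuous B) (hAm : Monotone A)
    (hA0 : A 0 = 0) (hB0 : B 0 = 0) (K σ : ℝ) (hσ : σ * σ = 1)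
    (hΦ : Monotone (fun u => K * u - (1/2) * A u - σ * B u))
    (P : ℝ → ProbabilityMeasure ℝ) (hP : Continuous P) (F : ℝ → ℝ → ℝ)
    (hFP : ∀ s x, F s x = ((P s : Measure ℝ) (Iic x)).toReal)
    (F₀ : ℝ → ℝ) (hF : IsWeakSolution A B F₀ F) (t : ℝ) (ht : 0 ≤ t) (c : ℝ)
    (k : ℝ → ℝ) (hk : ContDiff ℝ (⊤ : ℕ∞) k) (hkc : HasCompactSupport k) (hk0 : ∀ r, 0 ≤ k r)
    (ε : ℝ) (hε : 0 ≤ ε) (hkε : ∀ r, σ * deriv k r ≤ k r + ε) :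
    -σ * ((∫ x, k (x - (c + σ * K * t)) * F t x) - ∫ x, k (x - c) * F₀ x)
      ≤ (1/2) * (ε * A 1) * t := by
  -- basic facts on F
  have hF0 : ∀ s x, 0 ≤ F s x := fun s x => by rw [hFP]; positivity
  have hF1 : ∀ s x, F s x ≤ 1 := fun s x => by
    rw [hFP]
    exact ENNReal.toReal_le_of_le_ofReal zero_le_one (by simpa using prob_le_one)
  have hFm : ∀ s, Monotone (F s) := fun s x y hxy => by
    rw [hFP, hFP]
    exact ENNReal.toReal_mono (measure_ne_top _ _) (measure_mono (Iic_subset_Iic.2 hxy))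
  have hFmeas : Measurable (fun q : ℝ × ℝ => F q.1 q.2) := by
    simp_rw [hFP]; exact meas_F P hP
  -- derivatives of k
  have hk1 : ContDiff ℝ (⊤ : ℕ∞) (deriv k) := by
    have : ContDiff ℝ ((⊤ : ℕ∞) + 1) k := by simpa using hk
    exact (contDiff_succ_iff_deriv.1 this).2.2
  have hk2 : ContDiff ℝ (⊤ : ℕ∞) (deriv (deriv k)) := by
    have : ContDiff ℝ ((⊤ : ℕ∞) + 1) (deriv k) := by simpa using hk1
    exact (contDiff_succ_iff_deriv.1 this).2.2
  have hkdiff : Differentiable ℝ k := hk.differentiable (by simp)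
  have hk1diff : Differentiable ℝ (deriv k) := hk1.differentiable (by simp)
  have hk1c : HasCompactSupport (deriv k) := hkc.deriv
  have hk2c : HasCompactSupport (deriv (deriv k)) := hk1c.deriv
  let d : ℝ → ℝ := fun s => c + σ * K * s
  have hd : Continuous d := by fun_prop
  let η : ContDiffBump (0:ℝ) := ⟨t + 1, t + 2, by linarith, by linarith⟩
  have hη1 : ∀ s, s ∈ Metric.closedBall (0:ℝ) (t + 1) → η s = 1 := fun s hs =>
    η.one_of_mem_closedBall hs
  let g : ℝ → ℝ → ℝ := fun s x => η s * k (x - d s)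
  have hg : ContDiff ℝ (⊤ : ℕ∞) (uncurry g) := by
    have h1 : ContDiff ℝ (⊤ : ℕ∞) (fun q : ℝ × ℝ => η q.1) := η.contDiff.comp contDiff_fst
    have h2 : ContDiff ℝ (⊤ : ℕ∞) (fun q : ℝ × ℝ => k (q.2 - (c + σ * K * q.1))) :=
      hk.comp (by fun_prop)
    exact h1.mul h2
  have hgc : HasCompactSupport (uncurry g) := by
    have hη : IsCompact (tsupport η) := η.hasCompactSupport
    refine HasCompactSupport.intro ((hη.prod hkc).image
      (f := fun q : ℝ × ℝ => (q.1, q.2 + d q.1)) (by fun_prop)) ?_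
    rintro ⟨s, x⟩ hq
    by_contra hne
    have hne' : η s * k (x - d s) ≠ 0 := hne
    apply hq
    refine ⟨(s, x - d s), ⟨subset_tsupport _ (left_ne_zero_of_mul hne'),
      subset_tsupport _ (right_ne_zero_of_mul hne')⟩, ?_⟩
    simp
  have hball : ∀ s ∈ Icc (0:ℝ) t, s ∈ Metric.ball (0:ℝ) (t + 1) := by
    intro s hs
    rw [Metric.mem_ball, Real.dist_eq, sub_zero, abs_of_nonneg hs.1]; linarith [hs.2]
  have hηI : ∀ s ∈ Icc (0:ℝ) t, η s = 1 := fun s hs =>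
    hη1 s (Metric.ball_subset_closedBall (hball s hs))
  let J : ℝ → ℝ → ℝ := fun s x => (1/2) * A (F s x) * deriv (deriv k) (x - d s)
            + B (F s x) * deriv k (x - d s)
            + F s x * (deriv k (x - d s) * (-(σ * K)))
  have hw := hF g hg hgc t ht
  have hL1 : ∀ x, g t x * F t x = k (x - (c + σ * K * t)) * F t x := by
    intro x; simp only [g, hηI t ⟨ht, le_rfl⟩, one_mul, d]
  have hL2 : ∀ x, g 0 x * F₀ x = k (x - c) * F₀ x := by
    intro x; simp only [g, hηI 0 ⟨le_rfl, ht⟩, one_mul, d]; simp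
  have hR : (∫ x : ℝ, ∫ s in (0:ℝ)..t,
          ((1/2) * A (F s x) * deriv (deriv (fun y => g s y)) x
            + B (F s x) * deriv (fun y => g s y) x
            + F s x * deriv (fun r => g r x) s)) = ∫ x : ℝ, ∫ s in (0:ℝ)..t, J s x := by
    refine integral_congr_ae (Eventually.of_forall fun x => ?_)
    refine intervalIntegral.integral_congr fun s hs => ?_
    rw [uIcc_of_le ht] at hs
    have e1 : (fun y => g s y) = fun y => k (y - d s) := by
      funext y; simp only [g, hηI s hs, one_mul]
    have e2 : deriv (fun y => k (y - d s)) = fun y => deriv k (y - d s) := by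
      funext y; exact deriv_comp_sub_const ..
    have e3 : deriv (fun r => g r x) s = deriv k (x - d s) * (-(σ * K)) := by
      have hev : (fun r => g r x) =ᶠ[𝓝 s] fun r => k (x - d r) := by
        filter_upwards [Metric.isOpen_ball.mem_nhds (hball s hs)] with r hr
        simp only [g, hη1 r (Metric.ball_subset_closedBall hr), one_mul]
      rw [hev.deriv_eq]
      have hdd : HasDerivAt (fun r => x - d r) (-(σ * K)) s := by
        have := (((hasDerivAt_id s).const_mul (σ * K)).const_add c).const_sub x
        simpa [d] using this
      exact (HasDerivAt.comp (h := fun r => x - d r) s (hkdiff _).hasDerivAt hdd).deriv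
    have e4 : deriv (deriv (fun y => k (y - d s))) x = deriv (deriv k) (x - d s) := by
      rw [e2]; exact deriv_comp_sub_const ..
    simp only [e1, e3, e4, J]
    rw [e2]
  simp only [hL1, hL2] at hw
  rw [hR] at hw
  rw [hw]
  -- bounded factors
  have hAb : ∀ s x, ‖A (F s x)‖ ≤ A 1 := fun s x => by
    rw [Real.norm_of_nonneg (by rw [← hA0]; exact hAm (hF0 s x))]
    exact hAm (hF1 s x)
  obtain ⟨MB, hMB⟩ := (isCompact_Icc (a := (0:ℝ)) (b := 1)).exists_bound_of_continuousOn
    hB.continuousOn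
  have hJint : ∀ μ : Measure ℝ, IsFiniteMeasure μ → Integrable (uncurry J) (μ.prod volume) := by
    intro μ _
    have i1 := shear_int μ _ hk1.continuous hk1c d hd
    have i2 := shear_int μ _ hk2.continuous hk2c d hd
    have j1 : Integrable (fun q : ℝ × ℝ => A (F q.1 q.2) * deriv (deriv k) (q.2 - d q.1))
        (μ.prod volume) := 
      i2.bdd_mul (c := A 1) (hA.measurable.comp hFmeas).aestronglyMeasurable
        (Eventually.of_forall fun q => hAb q.1 q.2)
    have j2 : Integrable (fun q : ℝ × ℝ => B (F q.1 q.2) * deriv k (q.2 - d q.1))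
        (μ.prod volume) := 
      i1.bdd_mul (c := MB) (hB.measurable.comp hFmeas).aestronglyMeasurable
        (Eventually.of_forall fun q => hMB _ ⟨hF0 _ _, hF1 _ _⟩)
    have j3 : Integrable (fun q : ℝ × ℝ => F q.1 q.2 * (deriv k (q.2 - d q.1) * (-(σ * K))))
        (μ.prod volume) := 
      (i1.mul_const _).bdd_mul (c := 1) hFmeas.aestronglyMeasurable
        (Eventually.of_forall fun q => by
          rw [Real.norm_of_nonneg (hF0 _ _)]; exact hF1 _ _)
    refine ((j1.const_mul (1/2)).add (j2.add j3)).congr (Eventually.of_forall fun q => ?_)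
    simp only [Pi.add_apply, uncurry, J]; ring
  have hfm : IsFiniteMeasure (volume.restrict (uIoc (0:ℝ) t)) := by
    unfold uIoc; infer_instance
  rw [← intervalIntegral_integral_swap (f := J) (hJint _ hfm)]
  have hfin : ∀ s, -σ * ∫ x, J s x ≤ (1/2) * (ε * A 1) := by
    intro s
    let w : ℝ → ℝ := fun r => k (r - d s) - σ * deriv k (r - d s)
    have hwcd : ContDiff ℝ (⊤ : ℕ∞) w := by
      have h1 := hk.comp (contDiff_id.sub (contDiff_const (c := d s)))
      have h2 := hk1.comp (contDiff_id.sub (contDiff_const (c := d s)))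
      exact h1.sub (contDiff_const.mul h2)
    have hsh : ∀ ψ : ℝ → ℝ, HasCompactSupport ψ → HasCompactSupport (fun x => ψ (x - d s)) :=
      fun ψ hψ => hψ.comp_homeomorph (Homeomorph.subRight (d s))
    have hwc : HasCompactSupport w := (hsh k hkc).sub ((hsh _ hk1c).mul_left (f := fun _ => σ))
    have hdw : ∀ x, deriv w x = deriv k (x - d s) - σ * deriv (deriv k) (x - d s) := by
      intro x
      have h1 : HasDerivAt (fun r => k (r - d s)) (deriv k (x - d s)) x := by
        simpa using HasDerivAt.comp_sub_const x (d s) (hkdiff _).hasDerivAt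
      have h2 : HasDerivAt (fun r => deriv k (r - d s)) (deriv (deriv k) (x - d s)) x := by
        simpa using HasDerivAt.comp_sub_const x (d s) (hk1diff _).hasDerivAt
      exact (h1.sub (h2.const_mul σ)).deriv
    have b1 : ∫ x, A (F s x) * deriv w x ≤ ε * A 1 := by
      refine ibp (fun x => A (F s x)) (hAm.comp (hFm s)) (A 1) ?_ ?_ w (hwcd.of_le (by simp)) hwc
        ε hε ?_
      · intro x; rw [← hA0]; exact hAm (hF0 s x)
      · intro x; exact hAm (hF1 s x)
      · intro x; simp only [w]; linarith [hkε (x - d s)]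
    let Φ : ℝ → ℝ := fun u => K * u - (1/2) * A u - σ * B u
    have hΦ0 : Φ 0 = 0 := by simp [Φ, hA0, hB0]
    have b2 : ∫ x, Φ (F s x) * deriv (fun r => k (r - d s)) x ≤ 0 * Φ 1 := by
      refine ibp (fun x => Φ (F s x)) (hΦ.comp (hFm s)) (Φ 1) ?_ ?_ (fun r => k (r - d s))
        ((hk.comp (contDiff_id.sub (contDiff_const (c := d s)))).of_le (by simp)) (hsh k hkc)
        0 le_rfl ?_
      · intro x; rw [← hΦ0]; exact hΦ (hF0 s x)
      · intro x; exact hΦ (hF1 s x)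
      · intro x; simp only [neg_zero]; exact hk0 _
    have e0 : ∀ x, deriv (fun r => k (r - d s)) x = deriv k (x - d s) := fun x =>
      deriv_comp_sub_const ..
    have hFs : Measurable (F s) := (hFm s).measurable
    have hΦc : Continuous Φ := by fun_prop
    have i1 : Integrable (fun x => deriv k (x - d s)) :=
      (hk1.continuous.integrable_of_hasCompactSupport hk1c).comp_sub_right _
    have i2 : Integrable (fun x => deriv (deriv k) (x - d s)) :=
      (hk2.continuous.integrable_of_hasCompactSupport hk2c).comp_sub_right _
    have j1 : Integrable (fun x => A (F s x) * deriv w x) := by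
      simp_rw [hdw]
      exact (i1.sub (i2.const_mul σ)).bdd_mul (c := A 1)
        (hA.measurable.comp hFs).aestronglyMeasurable (Eventually.of_forall fun q => hAb s q)
    obtain ⟨MΦ, hMΦ⟩ := (isCompact_Icc (a := (0:ℝ)) (b := 1)).exists_bound_of_continuousOn
      hΦc.continuousOn
    have j2 : Integrable (fun x => Φ (F s x) * deriv (fun r => k (r - d s)) x) := by
      simp_rw [e0]
      exact i1.bdd_mul (c := MΦ)
        (hΦc.measurable.comp hFs).aestronglyMeasurable
        (Eventually.of_forall fun q => hMΦ _ ⟨hF0 _ _, hF1 _ _⟩)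
    calc -σ * ∫ x, J s x = ∫ x, -σ * J s x := (integral_const_mul _ _).symm
      _ = ∫ x, ((1/2) * (A (F s x) * deriv w x)
            + Φ (F s x) * deriv (fun r => k (r - d s)) x) := by
          refine integral_congr_ae (Eventually.of_forall fun x => ?_)
          simp only [hdw, e0, J, Φ]
          linear_combination (F s x * deriv k (x - d s) * K) * hσ
      _ = (1/2) * (∫ x, A (F s x) * deriv w x)
            + ∫ x, Φ (F s x) * deriv (fun r => k (r - d s)) x := by
          rw [integral_add (j1.const_mul _) j2, integral_const_mul]
      _ ≤ _ := by linarith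
  have hJ1 : IntervalIntegrable (fun s => ∫ x, J s x) volume 0 t := by
    rw [intervalIntegrable_iff]
    exact (hJint (volume.restrict (uIoc 0 t)) hfm).integral_prod_left
  calc -σ * ∫ s in (0:ℝ)..t, ∫ x, J s x = ∫ s in (0:ℝ)..t, -σ * ∫ x, J s x :=
        (intervalIntegral.integral_const_mul _ _).symm
    _ ≤ ∫ s in (0:ℝ)..t, (1/2) * (ε * A 1) :=
        intervalIntegral.integral_mono_on ht (hJ1.const_mul _) intervalIntegrable_const
          (fun s _ => hfin s)
    _ = _ := by simp; ring

lemma shift_bound (F : ℝ → ℝ) (hF : Monotone F) (h0 : ∀ x, 0 ≤ F x) (h1 : ∀ x, F x ≤ 1) (r : ℝ)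
    (hr : 0 ≤ r) : ∫⁻ x, ENNReal.ofReal (F x - F (x - r)) ≤ ENNReal.ofReal r := by
  have hFr : Measurable (fun x => F (x - r)) := hF.measurable.comp (measurable_id.sub_const r)
  have e1 : ∀ x, ENNReal.ofReal (F x - F (x - r))
      = ∫⁻ u in Ioo (0:ℝ) 1, {q : ℝ × ℝ | F (q.1 - r) < q.2 ∧ q.2 < F q.1}.indicator 1 (x, u) := by
    intro x
    have : ∀ u, {q : ℝ × ℝ | F (q.1 - r) < q.2 ∧ q.2 < F q.1}.indicator (1 : ℝ × ℝ → ℝ≥0∞) (x, u)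
        = (Ioo (F (x - r)) (F x)).indicator 1 u := by
      intro u; simp [indicator]
    simp_rw [this]
    rw [lintegral_indicator_one measurableSet_Ioo, Measure.restrict_apply measurableSet_Ioo,
      inter_eq_left.2 (Ioo_subset_Ioo (h0 _) (h1 _)), Real.volume_Ioo]
  simp_rw [e1]
  rw [lintegral_lintegral_swap]
  · calc _ ≤ ∫⁻ u in Ioo (0:ℝ) 1, ENNReal.ofReal r := by
          refine lintegral_mono fun u => ?_
          have : ∀ x, {q : ℝ × ℝ | F (q.1 - r) < q.2 ∧ q.2 < F q.1}.indicator (1 : ℝ × ℝ → ℝ≥0∞) (x, u)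
            = {x | F (x - r) < u ∧ u < F x}.indicator 1 x := by
            intro x; simp [indicator]
          simp_rw [this]
          have hms : MeasurableSet {x | F (x - r) < u ∧ u < F x} :=
            (measurableSet_lt hFr measurable_const).inter
            (measurableSet_lt measurable_const hF.measurable)
          rw [lintegral_indicator_one hms]
          refine (Real.volume_le_diam _).trans ?_
          refine Metric.ediam_le ?_
          have key : ∀ x ∈ {x | F (x - r) < u ∧ u < F x}, ∀ y ∈ {x | F (x - r) < u ∧ u < F x},
              y - x ≤ r := by
            rintro x ⟨hx1, hx2⟩ y ⟨hy1, hy2⟩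
            by_contra hlt
            have := hF (show x ≤ y - r by linarith)
            linarith
          intro x hx y hy
          rw [edist_dist, Real.dist_eq]
          refine ENNReal.ofReal_le_ofReal (abs_le.2 ⟨?_, ?_⟩)
          · linarith [key x hx y hy]
          · linarith [key y hy x hx]
      _ = ENNReal.ofReal r := by simp
  · refine Measurable.aemeasurable ?_
    refine measurable_one.indicator ?_
    exact (measurableSet_lt (hFr.comp measurable_fst) measurable_snd).inter
      (measurableSet_lt measurable_snd (hF.measurable.comp measurable_fst))

noncomputable def Lam (F : ℝ → ℝ) (x : ℝ) : ℝ≥0∞ :=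
  ∫⁻ r in Ioi (0:ℝ), ENNReal.ofReal (Real.exp (-r)) * ENNReal.ofReal (F x - F (x - r))

lemma exp_half_int (x : ℝ) : ∫⁻ y in Ioi x, ENNReal.ofReal (Real.exp (-(1/2) * y)) < ⊤ :=
  (exp_neg_integrableOn_Ioi x (by norm_num : (0:ℝ) < 1/2)).lintegral_lt_top

lemma Lam_meas (F : ℝ → ℝ) (hF : Monotone F) :
    Measurable (fun q : ℝ × ℝ => ENNReal.ofReal (Real.exp (-q.2)) *
      ENNReal.ofReal (F q.1 - F (q.1 - q.2))) := by
  have h1 : Measurable (fun q : ℝ × ℝ => F q.1) := hF.measurable.comp measurable_fst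
  have h2 : Measurable (fun q : ℝ × ℝ => F (q.1 - q.2)) :=
    hF.measurable.comp (measurable_fst.sub measurable_snd)
  exact (Real.measurable_exp.comp measurable_snd.neg).ennreal_ofReal.mul (h1.sub h2).ennreal_ofReal

lemma Lam_int (F : ℝ → ℝ) (hF : Monotone F) (h0 : ∀ x, 0 ≤ F x) (h1 : ∀ x, F x ≤ 1) :
    ∫⁻ x, Lam F x < ⊤ := by
  unfold Lam
  rw [lintegral_lintegral_swap (Lam_meas F hF).aemeasurable]
  calc _ ≤ ∫⁻ r in Ioi (0:ℝ), ENNReal.ofReal 2 * ENNReal.ofReal (Real.exp (-(1/2) * r)) := by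
        refine setLIntegral_mono' measurableSet_Ioi fun r hr => ?_
        have hr' : 0 < r := hr
        rw [lintegral_const_mul' _ _ ENNReal.ofReal_ne_top]
        refine (mul_le_mul_right (shift_bound F hF h0 h1 r hr'.le) _).trans ?_
        rw [← ENNReal.ofReal_mul (Real.exp_pos _).le, ← ENNReal.ofReal_mul (by norm_num)]
        refine ENNReal.ofReal_le_ofReal ?_
        have h2 : r ≤ 2 * Real.exp (1/2 * r) := by
          have := Real.add_one_le_exp (1/2 * r); linarith
        calc Real.exp (-r) * r ≤ Real.exp (-r) * (2 * Real.exp (1/2 * r)) := by gcongr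
          _ = 2 * (Real.exp (-r) * Real.exp (1/2 * r)) := by ring
          _ = _ := by rw [← Real.exp_add]; ring_nf
    _ < ⊤ := by
        rw [lintegral_const_mul' _ _ ENNReal.ofReal_ne_top]
        exact ENNReal.mul_lt_top ENNReal.ofReal_lt_top (exp_half_int 0)

lemma q1 (F0 F1 : ℝ → ℝ) (hF0 : Monotone F0) (hF1 : Monotone F1)
    (h00 : ∀ x, 0 ≤ F0 x) (h01 : ∀ x, F0 x ≤ 1) (h10 : ∀ x, 0 ≤ F1 x) (h11 : ∀ x, F1 x ≤ 1)
    (hk : ∀ c, ∫ s, kI (s - c) * F0 s ≤ ∫ s, kI (s - c) * F1 s) (x y : ℝ) :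
    ENNReal.ofReal (F0 x - F1 y) ≤
      ENNReal.ofReal (1 / (∫ r, kI r)) * ENNReal.ofReal (Real.exp (x - y)) * Lam F0 x := by
  have hm := kI_pos
  set m := ∫ r, kI r with hmdef
  have hki : Integrable (fun s => kI (s - y)) := kI_integrable.comp_sub_right y
  have hmy : ∫ s, kI (s - y) = m := integral_sub_right_eq_self kI y
  have hb : ∀ G : ℝ → ℝ, Monotone G → (∀ x, 0 ≤ G x) → (∀ x, G x ≤ 1) →
      Integrable (fun s => kI (s - y) * G s) := fun G hG g0 g1 =>
    hki.mul_bdd (c := 1) hG.measurable.aestronglyMeasurable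
      (Eventually.of_forall fun s => by rw [Real.norm_of_nonneg (g0 s)]; exact g1 s)
  have s1 : ∫ s, kI (s - y) * F1 s ≤ m * F1 y := by
    rw [← hmy, ← integral_mul_const]
    refine integral_mono (hb F1 hF1 h10 h11) (hki.mul_const _) fun s => ?_
    by_cases hs : s ≤ y
    · exact mul_le_mul_of_nonneg_left (hF1 hs) (kI_nonneg _)
    · have : kI (s - y) = 0 := kI_zero (by linarith)
      simp [this]
  let f : ℝ → ℝ := fun r => Real.exp (-r) * (F0 x - F0 (x - r))
  have hfi : IntegrableOn f (Ioi 0) := by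
    have := exp_neg_integrableOn_Ioi 0 (zero_lt_one (α := ℝ))
    have this' : IntegrableOn (fun x => Real.exp (-x)) (Ioi (0:ℝ)) := by simpa using this
    refine Integrable.mul_bdd (c := 1) this'
      (measurable_const.sub (hF0.measurable.comp (measurable_const.sub measurable_id))).aestronglyMeasurable
      (Eventually.of_forall fun s => ?_)
    rw [Real.norm_eq_abs, abs_le]
    constructor <;> linarith [h00 x, h01 x, h00 (x - s), h01 (x - s)]
  have s2 : m * F0 x - ∫ s, kI (s - y) * F0 s ≤ Real.exp (x - y) * ∫ r in Ioi 0, f r := by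
    rw [← hmy, ← integral_mul_const, ← integral_sub (hki.mul_const _) (hb F0 hF0 h00 h01)]
    rw [← integral_sub_left_eq_self _ _ x, ← integral_const_mul, ← integral_indicator measurableSet_Ioi]
    refine integral_mono ?_ ?_ fun r => ?_
    · exact ((hki.mul_const _).sub (hb F0 hF0 h00 h01)).comp_sub_left x
    · exact IntegrableOn.integrable_indicator (Integrable.const_mul hfi _) measurableSet_Ioi
    · simp only [indicator, mem_Ioi]
      split_ifs with hr
      · have a1 : kI (x - r - y) ≤ Real.exp (x - y) * Real.exp (-r) := by
          rw [← Real.exp_add]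
          refine (kI_le _).trans (le_of_eq ?_); ring_nf
        have a2 : 0 ≤ F0 x - F0 (x - r) := sub_nonneg.2 (hF0 (by linarith))
        have := mul_le_mul_of_nonneg_right a1 a2
        simp only [f]; linarith
      · have a2 : F0 x - F0 (x - r) ≤ 0 := sub_nonpos.2 (hF0 (by linarith))
        have := mul_nonpos_of_nonneg_of_nonpos (kI_nonneg (x - r - y)) a2
        linarith
  have hLam : ENNReal.ofReal (∫ r in Ioi 0, f r) = Lam F0 x := by
    rw [ofReal_integral_eq_lintegral_ofReal hfi]
    · unfold Lam
      refine lintegral_congr fun r => ?_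
      simp only [f]; rw [ENNReal.ofReal_mul (Real.exp_pos _).le]
    · filter_upwards [ae_restrict_mem measurableSet_Ioi] with r hr
      have hr' : 0 < r := hr
      exact mul_nonneg (Real.exp_pos _).le (sub_nonneg.2 (hF0 (by linarith)))
  rw [← hLam, ← ENNReal.ofReal_mul (by positivity), ← ENNReal.ofReal_mul (by positivity)]
  refine ENNReal.ofReal_le_ofReal ?_
  have := hk y
  have h3 : m * (F0 x - F1 y) ≤ Real.exp (x - y) * ∫ r in Ioi 0, f r := by linarith
  rw [mul_assoc, one_div, ← div_eq_inv_mul, le_div_iff₀ hm]; linarith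

noncomputable def Ew (q : ℝ × ℝ) : ℝ≥0∞ :=
  {q : ℝ × ℝ | q.1 < q.2}.indicator (fun q => ENNReal.ofReal (Real.exp (1/2 * (q.2 - q.1)))) q

lemma Ew_meas : Measurable Ew := by
  refine Measurable.indicator ?_ (measurableSet_lt measurable_fst measurable_snd)
  fun_prop

lemma q3 (F0 F1 : ℝ → ℝ) (hF0 : Monotone F0) (hF1 : Monotone F1)
    (h00 : ∀ x, 0 ≤ F0 x) (h01 : ∀ x, F0 x ≤ 1) (h10 : ∀ x, 0 ≤ F1 x) (h11 : ∀ x, F1 x ≤ 1)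
    (hk : ∀ c, ∫ s, kI (s - c) * F0 s ≤ ∫ s, kI (s - c) * F1 s) :
    ∫⁻ q : ℝ × ℝ, Ew q * ENNReal.ofReal (F0 q.1 - F1 q.2) < ⊤ := by
  have hmeas : Measurable (fun q : ℝ × ℝ => Ew q * ENNReal.ofReal (F0 q.1 - F1 q.2)) :=
    Ew_meas.mul ((hF0.measurable.comp measurable_fst).sub
      (hF1.measurable.comp measurable_snd)).ennreal_ofReal
  rw [Measure.volume_eq_prod, lintegral_prod _ hmeas.aemeasurable]
  set C := ENNReal.ofReal (1 / (∫ r, kI r))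
  set D := ∫⁻ y in Ioi (0:ℝ), ENNReal.ofReal (Real.exp (-(1/2) * y))
  have hD : D < ⊤ := exp_half_int 0
  calc _ ≤ ∫⁻ x, (C * D) * Lam F0 x := by
        refine lintegral_mono fun x => ?_
        calc _ ≤ ∫⁻ y, C * Lam F0 x * (Ioi (0:ℝ)).indicator
                (fun y => ENNReal.ofReal (Real.exp (-(1/2) * y))) (y - x) := by
              refine lintegral_mono fun y => ?_
              simp only [Ew, indicator, mem_ofPred_eq, mem_Ioi, sub_pos]
              split_ifs with h
              · refine (mul_le_mul_right (q1 F0 F1 hF0 hF1 h00 h01 h10 h11 hk x y) _).trans ?_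
                have : ENNReal.ofReal (Real.exp (-(1/2) * (y - x)))
                  = ENNReal.ofReal (Real.exp (1/2 * (y - x))) * ENNReal.ofReal (Real.exp (x - y)) := by
                  rw [← ENNReal.ofReal_mul (Real.exp_pos _).le, ← Real.exp_add]; ring_nf
                rw [this]
                apply le_of_eq; ring
              · simp
          _ = _ := by
              rw [lintegral_const_mul _ (by
                refine Measurable.comp (g := (Ioi (0:ℝ)).indicator
                  (fun y => ENNReal.ofReal (Real.exp (-(1/2) * y)))) ?_ (measurable_id.sub_const x)
                exact Measurable.indicator (by fun_prop) measurableSet_Ioi)]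
              rw [lintegral_sub_right_eq_self (fun z => (Ioi (0:ℝ)).indicator
                (fun y => ENNReal.ofReal (Real.exp (-(1/2) * y))) z) x,
                lintegral_indicator measurableSet_Ioi]
              simp only [D]; ring
    _ < ⊤ := by
        have hCD : C * D < ⊤ := ENNReal.mul_lt_top ENNReal.ofReal_lt_top hD
        rw [lintegral_const_mul' _ _ hCD.ne]
        exact ENNReal.mul_lt_top hCD (Lam_int F0 hF0 h00 h01)

noncomputable def Psi (d : ℝ) : ℝ≥0∞ := if 2 < d then ENNReal.ofReal (Real.exp (1/2 * (d - 2))) else 0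

lemma q2 (F0 F1 Q0 Q1 : ℝ → ℝ) (hF0 : Monotone F0) (hF1 : Monotone F1)
    (hQ0 : ∀ u ∈ Ioo (0:ℝ) 1, ∀ x, Q0 u < x → u ≤ F0 x)
    (hQ1 : ∀ u ∈ Ioo (0:ℝ) 1, ∀ y, y < Q1 u → F1 y ≤ u) :
    ∫⁻ u in Ioo (0:ℝ) 1, Psi (Q1 u - Q0 u) ≤
      ∫⁻ q : ℝ × ℝ, Ew q * ENNReal.ofReal (F0 q.1 - F1 q.2) := by
  let S : Set (ℝ × (ℝ × ℝ)) := {z | F1 z.2.2 ≤ z.1 ∧ z.1 ≤ F0 z.2.1}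
  have hS : MeasurableSet S := 
    (measurableSet_le (hF1.measurable.comp (measurable_snd.comp measurable_snd)) measurable_fst).inter
    (measurableSet_le measurable_fst (hF0.measurable.comp (measurable_fst.comp measurable_snd)))
  calc _ ≤ ∫⁻ u in Ioo (0:ℝ) 1, ∫⁻ q : ℝ × ℝ, S.indicator (fun z => Ew z.2) (u, q) := by
        refine setLIntegral_mono' measurableSet_Ioo fun u hu => ?_
        unfold Psi
        split_ifs with hd
        swap; · exact zero_le
        let T : Set (ℝ × ℝ) := Ioo (Q0 u) (Q0 u + 1) ×ˢ Ioo (Q1 u - 1) (Q1 u)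
        have hT : volume T = 1 := by
          rw [Measure.volume_eq_prod, Measure.prod_prod, Real.volume_Ioo, Real.volume_Ioo]
          simp
        have hTm : MeasurableSet T := measurableSet_Ioo.prod measurableSet_Ioo
        calc _ = ∫⁻ q in T, ENNReal.ofReal (Real.exp (1/2 * (Q1 u - Q0 u - 2))) := by
              rw [setLIntegral_const, hT, mul_one]
          _ ≤ ∫⁻ q in T, S.indicator (fun z => Ew z.2) (u, q) := by
              refine setLIntegral_mono' hTm ?_
              rintro ⟨x, y⟩ ⟨⟨hx1, hx2⟩, ⟨hy1, hy2⟩⟩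
              simp only at hx1 hx2 hy1 hy2
              have hmem : (u, (x, y)) ∈ S := ⟨hQ1 u hu y hy2, hQ0 u hu x hx1⟩
              rw [indicator_of_mem hmem]
              have hxy : x < y := by linarith
              simp only [Ew]
              rw [indicator_of_mem (by exact hxy)]
              refine ENNReal.ofReal_le_ofReal (Real.exp_le_exp.2 ?_)
              simp only; linarith
          _ ≤ _ := setLIntegral_le_lintegral _ _
    _ = ∫⁻ q : ℝ × ℝ, ∫⁻ u in Ioo (0:ℝ) 1, S.indicator (fun z => Ew z.2) (u, q) := by
        rw [lintegral_lintegral_swap]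
        exact ((Ew_meas.comp measurable_snd).indicator hS).aemeasurable
    _ ≤ _ := by
        refine lintegral_mono fun q => ?_
        have : ∀ u, S.indicator (fun z => Ew z.2) (u, q)
            = (Icc (F1 q.2) (F0 q.1)).indicator (fun _ => Ew q) u := by
          intro u; simp [indicator, S]
        simp_rw [this]
        rw [lintegral_indicator measurableSet_Icc, setLIntegral_const]
        gcongr
        refine (Measure.restrict_apply_le _ _).trans ?_
        rw [Real.volume_Icc]

lemma pow_bound (p : ℝ) (hp : 1 ≤ p) (d : ℝ) : ENNReal.ofReal ((max d 0) ^ p) ≤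
    ENNReal.ofReal (2 ^ p) + ENNReal.ofReal ((2 * p) ^ p * Real.exp 1) * Psi d := by
  have hp0 : 0 < p := by linarith
  unfold Psi
  split_ifs with h
  · refine le_trans ?_ le_add_self
    rw [← ENNReal.ofReal_mul (by positivity)]
    refine ENNReal.ofReal_le_ofReal ?_
    rw [max_eq_left (by linarith)]
    have h1 : d ≤ 2 * p * Real.exp (d / (2 * p)) := by
      have := Real.add_one_le_exp (d / (2 * p))
      have h2 : d / (2 * p) ≤ Real.exp (d / (2 * p)) := by linarith
      rw [div_le_iff₀ (by positivity)] at h2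
      linarith
    calc d ^ p ≤ (2 * p * Real.exp (d / (2 * p))) ^ p :=
          Real.rpow_le_rpow (by linarith) h1 hp0.le
      _ = (2 * p) ^ p * Real.exp (d / (2 * p) * p) := by
          rw [Real.mul_rpow (by positivity) (Real.exp_pos _).le, Real.exp_mul]
      _ = _ := by
          rw [mul_assoc, ← Real.exp_add]; congr 2; field_simp; ring
  · refine le_trans (ENNReal.ofReal_le_ofReal ?_) le_self_add
    exact Real.rpow_le_rpow (le_max_right _ _) (max_le (not_lt.1 h) (by norm_num)) hp0.le

lemma quant (F0 F1 Q0 Q1 : ℝ → ℝ) (hF0 : Monotone F0) (hF1 : Monotone F1)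
    (h00 : ∀ x, 0 ≤ F0 x) (h01 : ∀ x, F0 x ≤ 1) (h10 : ∀ x, 0 ≤ F1 x) (h11 : ∀ x, F1 x ≤ 1)
    (hk : ∀ c, ∫ s, kI (s - c) * F0 s ≤ ∫ s, kI (s - c) * F1 s)
    (hQ0 : ∀ u ∈ Ioo (0:ℝ) 1, ∀ x, Q0 u < x → u ≤ F0 x)
    (hQ1 : ∀ u ∈ Ioo (0:ℝ) 1, ∀ y, y < Q1 u → F1 y ≤ u) (p : ℝ) (hp : 1 ≤ p) :
    ∫⁻ u in Ioo (0:ℝ) 1, ENNReal.ofReal ((max (Q1 u - Q0 u) 0) ^ p) < ⊤ := by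
  refine lt_of_le_of_lt (lintegral_mono fun u => pow_bound p hp (Q1 u - Q0 u)) ?_
  rw [lintegral_add_left measurable_const, lintegral_const_mul' _ _ ENNReal.ofReal_ne_top]
  refine ENNReal.add_lt_top.2 ⟨by simp, ENNReal.mul_lt_top ENNReal.ofReal_lt_top ?_⟩
  exact (q2 F0 F1 Q0 Q1 hF0 hF1 hQ0 hQ1).trans_lt (q3 F0 F1 hF0 hF1 h00 h01 h10 h11 hk)

lemma kI_sigma_int (σ : ℝ) (hσ : σ * σ = 1) (e : ℝ) : Integrable (fun x => kI (σ * (x - e))) := by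
  have h0 : σ ≠ 0 := by rintro rfl; simp at hσ
  exact (kI_integrable.comp_mul_left' h0).comp_sub_right e

lemma kR_dct (σ : ℝ) (hσ : σ * σ = 1) (e : ℝ) (G : ℝ → ℝ) (hG : Monotone G)
    (h0 : ∀ x, 0 ≤ G x) (h1 : ∀ x, G x ≤ 1) :
    Tendsto (fun n : ℕ => ∫ x, kR n (σ * (x - e)) * G x) atTop
      (𝓝 (∫ x, kI (σ * (x - e)) * G x)) := by
  refine tendsto_integral_of_dominated_convergence (fun x => kI (σ * (x - e))) ?_
    (kI_sigma_int σ hσ e) ?_ ?_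
  · intro n
    have : Measurable (fun x => kR n (σ * (x - e))) :=
      ((kR_contDiff n).continuous.comp (by fun_prop)).measurable
    exact (this.mul hG.measurable).aestronglyMeasurable
  · intro n
    refine Eventually.of_forall fun x => ?_
    rw [Real.norm_of_nonneg (mul_nonneg (kR_nonneg _ _) (h0 x))]
    exact (mul_le_of_le_one_right (kR_nonneg _ _) (h1 x)).trans (kR_le _ _)
  · exact Eventually.of_forall fun x => (kR_tendsto _).mul_const _

lemma cdf_basic (P : Measure ℝ) [IsProbabilityMeasure P] :
    Monotone (cdfOf P) ∧ (∀ x, 0 ≤ cdfOf P x) ∧ (∀ x, cdfOf P x ≤ 1) := by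
  refine ⟨fun x y hxy => ?_, fun x => ENNReal.toReal_nonneg, fun x => ?_⟩
  · exact ENNReal.toReal_mono (measure_ne_top _ _) (measure_mono (Iic_subset_Iic.2 hxy))
  · exact ENNReal.toReal_le_of_le_ofReal zero_le_one (by simpa using prob_le_one)

lemma lim_core (A B : ℝ → ℝ) (hA : Continuous A) (hB : Continuous B) (hAm : Monotone A)
    (hA0 : A 0 = 0) (hB0 : B 0 = 0) (K σ : ℝ) (hσ : σ * σ = 1)
    (hΦ : Monotone (fun u => K * u - (1/2) * A u - σ * B u))
    (P : ℝ → ProbabilityMeasure ℝ) (hP : Continuous P) 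
    (μ : Measure ℝ) [IsProbabilityMeasure μ]
    (hF : IsWeakSolution A B (cdfOf μ) (fun s => cdfOf (P s : Measure ℝ))) (t : ℝ) (ht : 0 ≤ t)
    (c : ℝ) :
    -σ * ((∫ x, kI (σ * (x - (c + σ * K * t))) * cdfOf (P t : Measure ℝ) x)
      - ∫ x, kI (σ * (x - c)) * cdfOf μ x) ≤ 0 := by
  obtain ⟨C, hC0, hC⟩ := kR_deriv
  obtain ⟨m1, p1, o1⟩ := cdf_basic (P t : Measure ℝ)
  obtain ⟨m2, p2, o2⟩ := cdf_basic μ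
  have key : ∀ n : ℕ, -σ * ((∫ x, kR n (σ * (x - (c + σ * K * t))) * cdfOf (P t : Measure ℝ) x)
      - ∫ x, kR n (σ * (x - c)) * cdfOf μ x) ≤ (1/2) * ((C * Real.exp (-(n:ℝ))) * A 1) * t := by
    intro n
    have hd : ∀ r, deriv (fun r => kR n (σ * r)) r = σ * deriv (kR n) (σ * r) := by
      intro r
      have := deriv_comp_mul_left σ (kR n) r
      simpa using this
    have h0 : σ ≠ 0 := by rintro rfl; simp at hσ
    refine core A B hA hB hAm hA0 hB0 K σ hσ hΦ P hP (fun s => cdfOf (P s : Measure ℝ))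
      (fun s x => rfl) (cdfOf μ) hF t ht c (fun r => kR n (σ * r))
      ((kR_contDiff n).comp (contDiff_const.mul contDiff_id))
      ((kR_compact n).comp_homeomorph (Homeomorph.mulLeft₀ σ h0))
      (fun r => kR_nonneg _ _) _ (by positivity) ?_
    intro r
    rw [hd, ← mul_assoc, hσ, one_mul]
    exact hC _ _
  refine le_of_tendsto_of_tendsto' (((kR_dct σ hσ _ _ m1 p1 o1).sub
    (kR_dct σ hσ _ _ m2 p2 o2)).const_mul (-σ)) ?_ key
  have he : Tendsto (fun n : ℕ => Real.exp (-(n:ℝ))) atTop (𝓝 0) :=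
    Real.tendsto_exp_neg_atTop_nhds_zero.comp tendsto_natCast_atTop_atTop
  have := (((he.const_mul C).mul_const (A 1)).const_mul (1/2)).mul_const t
  simpa using this

lemma ext_coeff (a b : ℝ → ℝ)
    (ha : ContinuousOn a (Set.Icc 0 1)) (hb : ContinuousOn b (Set.Icc 0 1))
    (ha0 : ∀ u ∈ Set.Icc (0:ℝ) 1, 0 ≤ a u) :
    ∃ (A B : ℝ → ℝ) (K : ℝ), Continuous A ∧ Continuous B ∧ Monotone A ∧ A 0 = 0 ∧ B 0 = 0 ∧
      0 ≤ K ∧ (∀ u ∈ Icc (0:ℝ) 1, A u = primitive a u) ∧ (∀ u ∈ Icc (0:ℝ) 1, B u = primitive b u) ∧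
      (∀ σ, |σ| = 1 → Monotone (fun u => K * u - (1/2) * A u - σ * B u)) := by
  have hext : ∀ f : ℝ → ℝ, ContinuousOn f (Icc 0 1) → ∃ f' : ℝ → ℝ, ∃ M, Continuous f' ∧
      (∀ u ∈ Icc (0:ℝ) 1, f' u = f u) ∧ 0 ≤ M ∧ (∀ u, |f' u| ≤ M) ∧
      (∀ u, ∃ v ∈ Icc (0:ℝ) 1, f' u = f v) := by
    intro f hf
    obtain ⟨M, hM⟩ := (isCompact_Icc (a := (0:ℝ)) (b := 1)).exists_bound_of_continuousOn hf
    refine ⟨fun u => f (projIcc 0 1 zero_le_one u), M, ?_, ?_, ?_, ?_, ?_⟩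
    · exact hf.restrict.comp continuous_projIcc
    · intro u hu; simp [projIcc_of_mem zero_le_one hu]
    · exact (norm_nonneg _).trans (hM 0 (by simp))
    · intro u; exact hM _ (projIcc 0 1 zero_le_one u).2
    · intro u; exact ⟨_, (projIcc 0 1 zero_le_one u).2, rfl⟩
  obtain ⟨a', Ma, ca, ea, Ma0, ba, va⟩ := hext a ha
  obtain ⟨b', Mb, cb, eb, Mb0, bb, vb⟩ := hext b hb
  have hder : ∀ f : ℝ → ℝ, Continuous f → ∀ u, HasDerivAt (primitive f) (f u) u := fun f hf u =>
    (hf.integral_hasStrictDerivAt 0 u).hasDerivAt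
  have hcont : ∀ f : ℝ → ℝ, Continuous f → Continuous (primitive f) := fun f hf =>
    continuous_iff_continuousAt.2 fun u => (hder f hf u).continuousAt
  have hagree : ∀ f g : ℝ → ℝ, (∀ u ∈ Icc (0:ℝ) 1, f u = g u) →
      ∀ u ∈ Icc (0:ℝ) 1, primitive f u = primitive g u := by
    intro f g h u hu
    refine intervalIntegral.integral_congr fun v hv => ?_
    rw [uIcc_of_le hu.1] at hv
    exact h v ⟨hv.1, hv.2.trans hu.2⟩
  have ha'0 : ∀ u, 0 ≤ a' u := fun u => by
    obtain ⟨v, hv, e⟩ := va u; rw [e]; exact ha0 v hv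
  refine ⟨primitive a', primitive b', (1/2) * Ma + Mb, hcont _ ca, hcont _ cb, ?_, ?_, ?_, ?_,
    hagree _ _ ea, hagree _ _ eb, ?_⟩
  · exact monotone_of_hasDerivAt_nonneg (hder a' ca) ha'0
  · simp [primitive]
  · simp [primitive]
  · positivity
  · intro σ hσ
    refine monotone_of_hasDerivAt_nonneg (f' := fun u => ((1/2) * Ma + Mb) * 1 - (1/2) * a' u - σ * b' u)
      (fun u => ?_) (fun u => ?_)
    · exact (((hasDerivAt_id u).const_mul _).sub ((hder a' ca u).const_mul _)).sub
        ((hder b' cb u).const_mul _)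
    · have h1 : σ * b' u ≤ Mb := by
        refine (le_abs_self _).trans ?_
        rw [abs_mul, hσ, one_mul]; exact bb u
      have h2 := (le_abs_self _).trans (ba u)
      simp only [Pi.zero_apply]; linarith

lemma pinv_facts (P : Measure ℝ) [IsProbabilityMeasure P] (u : ℝ) (hu : u ∈ Ioo (0:ℝ) 1) :
    {x : ℝ | u < cdfOf P x}.Nonempty ∧ BddBelow {x : ℝ | u < cdfOf P x} := by
  have e : ∀ x, ProbabilityTheory.cdf P x = cdfOf P x := fun x => ProbabilityTheory.cdf_eq_real P x
  constructor
  · have := (ProbabilityTheory.tendsto_cdf_atTop P).eventually (lt_mem_nhds hu.2)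
    obtain ⟨x, hx⟩ := this.exists
    exact ⟨x, by rw [e] at hx; exact hx⟩
  · have := (ProbabilityTheory.tendsto_cdf_atBot P).eventually (gt_mem_nhds hu.1)
    obtain ⟨x, hx⟩ := this.exists
    refine ⟨x, fun y hy => ?_⟩
    by_contra hlt
    rw [e] at hx
    have h1 := (cdf_basic P).1 (le_of_lt (not_le.1 hlt))
    have hy' : u < cdfOf P y := hy
    linarith

lemma pinv_up (P : Measure ℝ) [IsProbabilityMeasure P] (u : ℝ) (hu : u ∈ Ioo (0:ℝ) 1) (x : ℝ)
    (hx : pinv (cdfOf P) u < x) : u ≤ cdfOf P x := by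
  obtain ⟨y, hy, hyx⟩ := exists_lt_of_csInf_lt (pinv_facts P u hu).1 hx
  exact (le_of_lt hy).trans ((cdf_basic P).1 hyx.le)

lemma pinv_down (P : Measure ℝ) [IsProbabilityMeasure P] (u : ℝ) (hu : u ∈ Ioo (0:ℝ) 1) (x : ℝ)
    (hx : x < pinv (cdfOf P) u) : cdfOf P x ≤ u := by
  have := notMem_of_lt_csInf hx (pinv_facts P u hu).2
  exact not_lt.1 this

lemma pinv_meas (P : Measure ℝ) [IsProbabilityMeasure P] :
    AEMeasurable (pinv (cdfOf P)) (volume.restrict (Ioo (0:ℝ) 1)) := by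
  refine aemeasurable_restrict_of_monotoneOn measurableSet_Ioo fun u hu v hv huv => ?_
  exact csInf_le_csInf (pinv_facts P u hu).2 (pinv_facts P v hv).1
    (fun x hx => lt_of_le_of_lt huv hx)

lemma tri (p : ℝ) (hp : 1 ≤ p) (x a b c : ℝ) (hx : 0 ≤ x) (ha : 0 ≤ a) (hb : 0 ≤ b) (hc : 0 ≤ c)
    (h : x ≤ a + b + c) : ENNReal.ofReal (x ^ p) ≤ ENNReal.ofReal (3 ^ p) *
      (ENNReal.ofReal (a ^ p) + (ENNReal.ofReal (b ^ p) + ENNReal.ofReal (c ^ p))) := by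
  have hp0 : 0 ≤ p := by linarith
  have pa := Real.rpow_nonneg ha p
  have pb := Real.rpow_nonneg hb p
  have pc := Real.rpow_nonneg hc p
  rw [← ENNReal.ofReal_add pb pc, ← ENNReal.ofReal_add pa (by positivity),
    ← ENNReal.ofReal_mul (by positivity)]
  refine ENNReal.ofReal_le_ofReal ?_
  have key : ∀ m, 0 ≤ m → x ≤ 3 * m → x ^ p ≤ 3 ^ p * m ^ p := fun m hm hxm => by
    rw [← Real.mul_rpow (by norm_num) hm]
    exact Real.rpow_le_rpow hx hxm hp0
  have h3 : (0:ℝ) ≤ 3 ^ p := by positivity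
  rcases le_total a b with h1 | h1 <;> rcases le_total b c with h2 | h2 <;>
    rcases le_total a c with h4 | h4
  all_goals first
    | exact (key a ha (by linarith)).trans (mul_le_mul_of_nonneg_left (by linarith) h3)
    | exact (key b hb (by linarith)).trans (mul_le_mul_of_nonneg_left (by linarith) h3)
    | exact (key c hc (by linarith)).trans (mul_le_mul_of_nonneg_left (by linarith) h3)

lemma moment (a b : ℝ → ℝ)
    (ha : ContinuousOn a (Set.Icc 0 1)) (hb : ContinuousOn b (Set.Icc 0 1))
    (ha0 : ∀ u ∈ Set.Icc (0:ℝ) 1, 0 ≤ a u)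
    (μ : Measure ℝ) [IsProbabilityMeasure μ] (F : ℝ → ℝ → ℝ)
    (hF : IsWeakSolution (primitive a) (primitive b) (cdfOf μ) F) (hFmem : MemF F)
    (p : ℝ) (hp : 1 ≤ p) (t : ℝ) (ht : 0 ≤ t) :
    AEMeasurable (pinv (F t)) (volume.restrict (Ioo (0:ℝ) 1)) ∧
    ∫⁻ u in Ioo (0:ℝ) 1, ENNReal.ofReal (|pinv (F t) u - pinv (cdfOf μ) u| ^ p) < ⊤ := by
  obtain ⟨P0, hP0, -, -, hFP0⟩ := hFmem
  obtain ⟨A, B, K, hA, hB, hAm, hA0, hB0, hK, eA, eB, hΦ⟩ := ext_coeff a b ha hb ha0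
  let P : ℝ → ProbabilityMeasure ℝ := fun s => P0 (max s 0)
  have hP : Continuous P := hP0.comp_continuous (by fun_prop) (fun s => mem_Ici.2 (le_max_right s 0))
  have hFP : ∀ s, 0 ≤ s → F s = cdfOf (P s : Measure ℝ) := by
    intro s hs; funext x
    simp only [P, max_eq_left hs]; exact hFP0 s hs x
  have hw : IsWeakSolution A B (cdfOf μ) (fun s => cdfOf (P s : Measure ℝ)) := by
    intro g hg hgc T hT
    have h := hF g hg hgc T hT
    simp only [hFP T hT] at h
    rw [h]
    refine integral_congr_ae (Eventually.of_forall fun x => ?_)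
    refine intervalIntegral.integral_congr fun s hs => ?_
    rw [uIcc_of_le hT] at hs
    obtain ⟨-, p1, o1⟩ := cdf_basic (P s : Measure ℝ)
    simp only [hFP s hs.1, eA _ ⟨p1 x, o1 x⟩, eB _ ⟨p1 x, o1 x⟩]
  rw [hFP t ht]
  refine ⟨pinv_meas _, ?_⟩
  obtain ⟨m1, p1, o1⟩ := cdf_basic (P t : Measure ℝ)
  obtain ⟨m0, p0, o0⟩ := cdf_basic μ
  set Ft := cdfOf (P t : Measure ℝ) with hFt
  set F0 := cdfOf μ with hF0
  have up : ∫⁻ u in Ioo (0:ℝ) 1,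
      ENNReal.ofReal ((max ((pinv Ft u - K * t) - pinv F0 u) 0) ^ p) < ⊤ := by
    refine quant F0 (fun y => Ft (y + K * t)) (pinv F0) (fun u => pinv Ft u - K * t) m0
      (fun x y hxy => m1 (by linarith)) p0 o0 (fun x => p1 _) (fun x => o1 _) ?_ ?_ ?_ p hp
    · intro c
      have h := lim_core A B hA hB hAm hA0 hB0 K 1 (by norm_num) (hΦ 1 (by norm_num)) P hP μ hw t ht c
      have e := integral_add_right_eq_self (μ := volume) (fun s => kI (s - (c + K * t)) * Ft s) (K * t)
      have e2 : ∀ s, s + K * t - (c + K * t) = s - c := fun s => by ring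
      simp only [e2] at e
      simp only [one_mul] at h
      rw [e]; linarith
    · intro u hu x hx; exact pinv_up μ u hu x hx
    · intro u hu y hy; exact pinv_down _ u hu _ (by linarith)
  have down' : ∫⁻ u in Ioo (0:ℝ) 1,
      ENNReal.ofReal ((max ((-pinv Ft (1 - u) - K * t) - (-pinv F0 (1 - u))) 0) ^ p) < ⊤ := by
    refine quant (fun s => 1 - F0 (-s)) (fun y => 1 - Ft (-y - K * t)) (fun u => -pinv F0 (1 - u))
      (fun u => -pinv Ft (1 - u) - K * t)
      (fun x y hxy => sub_le_sub_left (m0 (neg_le_neg hxy)) _)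
      (fun x y hxy => sub_le_sub_left (m1 (by linarith)) _)
      (fun x => by linarith [o0 (-x)]) (fun x => by linarith [p0 (-x)])
      (fun x => by linarith [o1 (-x - K * t)]) (fun x => by linarith [p1 (-x - K * t)])
      ?_ ?_ ?_ p hp
    · intro c
      have h := lim_core A B hA hB hAm hA0 hB0 K (-1) (by norm_num) (hΦ (-1) (by norm_num)) P hP μ
        hw t ht (-c)
      have hki : Integrable (fun s => kI (s - c)) := kI_integrable.comp_sub_right c
      have hbd : ∀ G : ℝ → ℝ, Measurable G → (∀ x, 0 ≤ G x) → (∀ x, G x ≤ 1) →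
          Integrable (fun s => kI (s - c) * G s) := fun G hG g0 g1 =>
        hki.mul_bdd (c := 1) hG.aestronglyMeasurable
          (Eventually.of_forall fun s => by rw [Real.norm_of_nonneg (g0 s)]; exact g1 s)
      have b0 := hbd (fun s => F0 (-s)) (m0.measurable.comp measurable_neg)
        (fun x => p0 _) (fun x => o0 _)
      have b1 := hbd (fun s => Ft (-s - K * t))
        (m1.measurable.comp (measurable_neg.sub_const _)) (fun x => p1 _) (fun x => o1 _)
      simp only [mul_sub, mul_one]
      rw [integral_sub hki b0, integral_sub hki b1]
      have e1 : ∫ s, kI (s - c) * F0 (-s) = ∫ x, kI (-1 * (x - -c)) * F0 x := by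
        rw [← integral_neg_eq_self (fun x => kI (-1 * (x - -c)) * F0 x)]
        congr 1; funext s; congr 2; ring
      have e2 : ∫ s, kI (s - c) * Ft (-s - K * t)
          = ∫ x, kI (-1 * (x - (-c + -1 * K * t))) * Ft x := by
        rw [← integral_sub_left_eq_self (fun x => kI (-1 * (x - (-c + -1 * K * t))) * Ft x)
          volume (-(K * t))]
        congr 1; funext s; congr 2 <;> ring
      rw [e1, e2]; linarith
    · intro u hu x hx
      have := pinv_down μ (1 - u) ⟨by linarith [hu.2], by linarith [hu.1]⟩ (-x) (by linarith)
      linarith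
    · intro u hu y hy
      have := pinv_up (P t : Measure ℝ) (1 - u) ⟨by linarith [hu.2], by linarith [hu.1]⟩
        (-y - K * t) (by linarith)
      linarith
  have down : ∫⁻ u in Ioo (0:ℝ) 1,
      ENNReal.ofReal ((max ((pinv F0 u - K * t) - pinv Ft u) 0) ^ p) < ⊤ := by
    refine lt_of_le_of_lt (le_of_eq ?_) down'
    rw [← lintegral_indicator measurableSet_Ioo, ← lintegral_indicator measurableSet_Ioo,
      ← lintegral_sub_left_eq_self _ (1:ℝ)]
    congr 1; funext u
    simp only [indicator]
    by_cases hu : u ∈ Ioo (0:ℝ) 1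
    · rw [if_pos hu, if_pos (by constructor <;> linarith [hu.1, hu.2])]
      congr 3; ring
    · rw [if_neg hu, if_neg]
      intro h; exact hu (by constructor <;> linarith [h.1, h.2])
  have hKt : 0 ≤ K * t := mul_nonneg hK ht
  have q0m := pinv_meas μ
  have q1m := pinv_meas (P t : Measure ℝ)
  calc _ ≤ ∫⁻ u in Ioo (0:ℝ) 1, ENNReal.ofReal (3 ^ p) *
      (ENNReal.ofReal ((K * t) ^ p) +
      (ENNReal.ofReal ((max ((pinv Ft u - K * t) - pinv F0 u) 0) ^ p)
        + ENNReal.ofReal ((max ((pinv F0 u - K * t) - pinv Ft u) 0) ^ p))) := by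
        refine lintegral_mono fun u => tri p hp _ _ _ _ (abs_nonneg _) hKt (le_max_right _ _)
          (le_max_right _ _) ?_
        have h1 := le_max_left ((pinv Ft u - K * t) - pinv F0 u) 0
        have h2 := le_max_left ((pinv F0 u - K * t) - pinv Ft u) 0
        have h3 := le_max_right ((pinv Ft u - K * t) - pinv F0 u) 0
        have h4 := le_max_right ((pinv F0 u - K * t) - pinv Ft u) 0
        rw [abs_le]; constructor <;> linarith
    _ < ⊤ := by
        rw [lintegral_const_mul' _ _ ENNReal.ofReal_ne_top, lintegral_add_left measurable_const,
          lintegral_add_left' ]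
        · refine ENNReal.mul_lt_top ENNReal.ofReal_lt_top (ENNReal.add_lt_top.2 ⟨by simp, ?_⟩)
          exact ENNReal.add_lt_top.2 ⟨up, down⟩
        · exact ((((q1m.sub_const _).sub q0m).max aemeasurable_const).pow_const p).ennreal_ofReal

theorem wasserstein_flow_infinite
    (a b : ℝ → ℝ)
    (ha : ContinuousOn a (Set.Icc 0 1)) (hb : ContinuousOn b (Set.Icc 0 1))
    (ha0 : ∀ u ∈ Set.Icc (0:ℝ) 1, 0 ≤ a u)
    (hD1 : StrictMonoOn (primitive a) (Set.Icc 0 1))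
    (μ ν : Measure ℝ) [IsProbabilityMeasure μ] [IsProbabilityMeasure ν]
    (hμ : Integrable (fun x => |x|) μ) (hν : Integrable (fun x => |x|) ν)
    (F G : ℝ → ℝ → ℝ)
    (hF : IsWeakSolution (primitive a) (primitive b) (cdfOf μ) F) (hFmem : MemF F)
    (hG : IsWeakSolution (primitive a) (primitive b) (cdfOf ν) G) (hGmem : MemF G)
    (p : ℝ) (hp : 1 ≤ p)
    (hW : Wdist p (cdfOf μ) (cdfOf ν) = ⊤) :
    ∀ t : ℝ, 0 ≤ t → Wdist p (F t) (G t) = ⊤ := by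
  intro t ht
  have hp1 : 0 < 1 / p := by positivity
  unfold Wdist at hW ⊢
  rw [ENNReal.rpow_eq_top_iff_of_pos hp1] at hW ⊢
  obtain ⟨mF, fF⟩ := moment a b ha hb ha0 μ F hF hFmem p hp t ht
  obtain ⟨mG, fG⟩ := moment a b ha hb ha0 ν G hG hGmem p hp t ht
  by_contra hne
  have hlt := lt_top_iff_ne_top.2 hne
  refine absurd hW (ne_of_lt ?_)
  calc _ ≤ ∫⁻ u in Ioo (0:ℝ) 1, ENNReal.ofReal (3 ^ p) *
      (ENNReal.ofReal (|pinv (F t) u - pinv (cdfOf μ) u| ^ p) +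
      (ENNReal.ofReal (|pinv (G t) u - pinv (cdfOf ν) u| ^ p)
        + ENNReal.ofReal (|pinv (F t) u - pinv (G t) u| ^ p))) := by
        refine lintegral_mono fun u => tri p hp _ _ _ _ (abs_nonneg _) (abs_nonneg _) (abs_nonneg _)
          (abs_nonneg _) ?_
        have h1 := abs_le.1 (le_refl |pinv (F t) u - pinv (cdfOf μ) u|)
        have h2 := abs_le.1 (le_refl |pinv (G t) u - pinv (cdfOf ν) u|)
        have h3 := abs_le.1 (le_refl |pinv (F t) u - pinv (G t) u|)
        rw [abs_le]; constructor <;> linarith [h1.1, h1.2, h2.1, h2.2, h3.1, h3.2]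
    _ < ⊤ := by
        have z1 : AEMeasurable (fun u => ENNReal.ofReal (|pinv (F t) u - pinv (cdfOf μ) u| ^ p))
          (volume.restrict (Ioo (0:ℝ) 1)) :=
          ((continuous_abs.measurable.comp_aemeasurable (mF.sub (pinv_meas μ))).pow_const
            p).ennreal_ofReal
        have z2 : AEMeasurable (fun u => ENNReal.ofReal (|pinv (G t) u - pinv (cdfOf ν) u| ^ p))
          (volume.restrict (Ioo (0:ℝ) 1)) :=
          ((continuous_abs.measurable.comp_aemeasurable (mG.sub (pinv_meas ν))).pow_const
            p).ennreal_ofReal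
        rw [lintegral_const_mul' _ _ ENNReal.ofReal_ne_top, lintegral_add_left' z1,
          lintegral_add_left' z2]
        exact ENNReal.mul_lt_top ENNReal.ofReal_lt_top (ENNReal.add_lt_top.2
          ⟨fF, ENNReal.add_lt_top.2 ⟨fG, hlt⟩⟩)
end
end

section
/- Let F and G be cumulative distribution functions of probability measures on ℝ and let p > 1. Then, as an identity in [0,∞], ∫₀¹ |F^{-1}(u) − G^{-1}(u)|^p du = p(p−1) ∫_{ℝ²} 1_{x<y} ( [G(x)−F(y)]⁺ + [F(x)−G(y)]⁺ ) (y−x)^{p−2} dx dy, where z⁺ = max(z,0). -/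
open MeasureTheory Set Filter Topology
open scoped ENNReal

noncomputable section

theorem lint_rpow_right (r c d : ℝ) (hr : -1 < r) (hcd : c ≤ d) :
    ∫⁻ y in Ioo c d, ENNReal.ofReal ((y - c) ^ r) = ENNReal.ofReal ((d - c) ^ (r + 1) / (r + 1)) := by
  rw [setLIntegral_congr Ioo_ae_eq_Ioc]
  have hi : IntervalIntegrable (fun y : ℝ => (y - c) ^ r) volume c d := by
    have := (intervalIntegral.intervalIntegrable_rpow' (a := 0) (b := d - c) hr).comp_sub_right c
    simpa using this
  rw [← ofReal_integral_eq_lintegral_ofReal]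
  · rw [← intervalIntegral.integral_of_le hcd,
      intervalIntegral.integral_comp_sub_right (fun y => y ^ r), integral_rpow (Or.inl hr)]
    rw [sub_self, Real.zero_rpow (by linarith), sub_zero]
  · exact (intervalIntegrable_iff_integrableOn_Ioc_of_le hcd).1 hi
  · filter_upwards [ae_restrict_mem measurableSet_Ioc] with y hy
    exact Real.rpow_nonneg (by linarith [hy.1]) _

theorem lint_rpow_left (r c d : ℝ) (hr : -1 < r) (hcd : c ≤ d) :
    ∫⁻ x in Ioo c d, ENNReal.ofReal ((d - x) ^ r) = ENNReal.ofReal ((d - c) ^ (r + 1) / (r + 1)) := by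
  rw [setLIntegral_congr Ioo_ae_eq_Ioc]
  have hi : IntervalIntegrable (fun y : ℝ => (d - y) ^ r) volume c d := by
    have := (intervalIntegral.intervalIntegrable_rpow' (a := 0) (b := d - c) hr).comp_sub_left d
    simpa using this.symm
  rw [← ofReal_integral_eq_lintegral_ofReal]
  · rw [← intervalIntegral.integral_of_le hcd,
      intervalIntegral.integral_comp_sub_left (fun y => y ^ r), integral_rpow (Or.inl hr)]
    rw [sub_self, Real.zero_rpow (by linarith), sub_zero]
  · exact (intervalIntegrable_iff_integrableOn_Ioc_of_le hcd).1 hi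
  · filter_upwards [ae_restrict_mem measurableSet_Ioc] with y hy
    exact Real.rpow_nonneg (by linarith [hy.2]) _

theorem tri_measurable (a b : ℝ) :
    MeasurableSet {q : ℝ × ℝ | b < q.1 ∧ q.1 < q.2 ∧ q.2 < a} :=
  (measurableSet_lt measurable_const measurable_fst).inter
    ((measurableSet_lt measurable_fst measurable_snd).inter
      (measurableSet_lt measurable_snd measurable_const))

theorem tri_integral (p a b : ℝ) (hp : 1 < p) :
    ENNReal.ofReal (p * (p - 1)) *
      ∫⁻ q in {q : ℝ × ℝ | b < q.1 ∧ q.1 < q.2 ∧ q.2 < a}, ENNReal.ofReal ((q.2 - q.1) ^ (p - 2))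
      = ENNReal.ofReal ((max (a - b) 0) ^ p) := by
  rcases le_or_gt a b with hab | hab
  · have : {q : ℝ × ℝ | b < q.1 ∧ q.1 < q.2 ∧ q.2 < a} = ∅ := by
      ext q
      simp only [mem_ofPred_eq, mem_empty_iff_false, iff_false]
      rintro ⟨h1, h2, h3⟩
      linarith
    rw [this, max_eq_right (by linarith), Real.zero_rpow (by linarith)]
    simp
  rw [max_eq_left (by linarith), ← lintegral_indicator (tri_measurable a b)]
  rw [Measure.volume_eq_prod, lintegral_prod]
  swap
  · exact (Measurable.indicator (by fun_prop) (tri_measurable a b)).aemeasurable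
  have key : ∀ x : ℝ, ∫⁻ y, ({q : ℝ × ℝ | b < q.1 ∧ q.1 < q.2 ∧ q.2 < a}.indicator
      (fun q => ENNReal.ofReal ((q.2 - q.1) ^ (p - 2))) (x, y))
      = (Ioo b a).indicator (fun x => ENNReal.ofReal ((a - x) ^ (p - 1)) *
          ENNReal.ofReal ((p - 1)⁻¹)) x := by
    intro x
    by_cases hx : x ∈ Ioo b a
    · rw [indicator_of_mem hx]
      have h1 := lint_rpow_right (p - 2) x a (by linarith) hx.2.le
      rw [← lintegral_indicator measurableSet_Ioo] at h1
      rw [← ENNReal.ofReal_mul (Real.rpow_nonneg (by linarith [hx.2]) _), ← div_eq_mul_inv]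
      have e : p - 2 + 1 = p - 1 := by ring
      rw [e] at h1
      rw [← h1]
      refine lintegral_congr fun y => ?_
      by_cases hy : y ∈ Ioo x a
      · rw [indicator_of_mem hy, indicator_of_mem (show (x, y) ∈ {q : ℝ × ℝ | b < q.1 ∧ q.1 < q.2 ∧ q.2 < a} from ⟨hx.1, hy.1, hy.2⟩)]
      · rw [indicator_of_notMem hy, indicator_of_notMem]
        exact fun h => hy ⟨h.2.1, h.2.2⟩
    · rw [indicator_of_notMem hx]
      rw [← lintegral_zero (μ := (volume : Measure ℝ))]
      refine lintegral_congr fun y => ?_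
      rw [indicator_of_notMem]
      exact fun h => hx ⟨h.1, h.2.1.trans h.2.2⟩
  simp_rw [key]
  rw [lintegral_indicator measurableSet_Ioo, lintegral_mul_const _ (by fun_prop),
    lint_rpow_left (p - 1) b a (by linarith) hab.le]
  have hnn : 0 ≤ (a - b) ^ p := Real.rpow_nonneg (by linarith) _
  have e : p - 1 + 1 = p := by ring
  rw [e, ← ENNReal.ofReal_mul (by positivity), ← ENNReal.ofReal_mul (by nlinarith)]
  congr 1
  have : p - 1 ≠ 0 := by linarith
  field_simp

theorem pinv_le {F : ℝ → ℝ} (hbot : Tendsto F atBot (𝓝 0)) {u x : ℝ}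
    (hu : 0 < u) (hm : Monotone F) (h : u < F x) : pinv F u ≤ x := by
  refine csInf_le ?_ h
  obtain ⟨z, hz⟩ := (hbot.eventually (gt_mem_nhds hu)).exists
  refine ⟨z, fun w hw => ?_⟩
  by_contra hc
  have := hm (not_le.1 hc).le
  exact absurd hw (not_lt.2 (this.trans hz.le))

theorem le_pinv {F : ℝ → ℝ} (htop : Tendsto F atTop (𝓝 1)) {u x : ℝ}
    (hu : u < 1) (hm : Monotone F) (h : F x ≤ u) : x ≤ pinv F u := by
  obtain ⟨z, hz⟩ := (htop.eventually (lt_mem_nhds hu)).exists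
  refine le_csInf ⟨z, hz⟩ fun w hw => ?_
  by_contra hc
  have := hm (not_le.1 hc).le
  exact absurd hw (not_lt.2 (this.trans h))

theorem slice_eq {F G : ℝ → ℝ} (hF : Monotone F) (hG : Monotone G)
    (hFb : Tendsto F atBot (𝓝 0)) (hFt : Tendsto F atTop (𝓝 1))
    (hGb : Tendsto G atBot (𝓝 0)) (hGt : Tendsto G atTop (𝓝 1)) {u : ℝ} (hu : u ∈ Ioo (0:ℝ) 1) :
    {q : ℝ × ℝ | q.1 < q.2 ∧ F q.2 ≤ u ∧ u < G q.1} =ᵐ[volume]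
      {q : ℝ × ℝ | pinv G u < q.1 ∧ q.1 < q.2 ∧ q.2 < pinv F u} := by
  have h1 : ∀ᵐ q : ℝ × ℝ, q.1 ≠ pinv G u := by
    rw [Measure.volume_eq_prod]
    exact Measure.quasiMeasurePreserving_fst.ae (Measure.ae_ne volume (pinv G u))
  have h2 : ∀ᵐ q : ℝ × ℝ, q.2 ≠ pinv F u := by
    rw [Measure.volume_eq_prod]
    exact Measure.quasiMeasurePreserving_snd.ae (Measure.ae_ne volume (pinv F u))
  filter_upwards [h1, h2] with q hq1 hq2
  apply propext
  constructor
  · rintro ⟨h, hf, hg⟩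
    exact ⟨lt_of_le_of_ne (pinv_le hGb hu.1 hG hg) hq1.symm, h,
      lt_of_le_of_ne (le_pinv hFt hu.2 hF hf) hq2⟩
  · rintro ⟨hg, h, hf⟩
    refine ⟨h, ?_, ?_⟩
    · by_contra hc
      exact absurd (pinv_le hFb hu.1 hF (not_le.1 hc)) (not_le.2 hf)
    · by_contra hc
      exact absurd (le_pinv hGt hu.2 hG (not_lt.1 hc)) (not_le.2 hg)

theorem half_formula {F G : ℝ → ℝ} (hF : Monotone F) (hG : Monotone G)
    (hFb : Tendsto F atBot (𝓝 0)) (hFt : Tendsto F atTop (𝓝 1))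
    (hGb : Tendsto G atBot (𝓝 0)) (hGt : Tendsto G atTop (𝓝 1))
    (p : ℝ) (hp : 1 < p) :
    ∫⁻ u in Ioo (0:ℝ) 1, ENNReal.ofReal ((max (pinv F u - pinv G u) 0) ^ p)
      = ENNReal.ofReal (p * (p - 1)) *
        ∫⁻ q in {q : ℝ × ℝ | q.1 < q.2},
          ENNReal.ofReal (max (G q.1 - F q.2) 0 * (q.2 - q.1) ^ (p - 2)) := by
  have hFm := hF.measurable
  have hGm := hG.measurable
  have hlt : MeasurableSet {q : ℝ × ℝ | q.1 < q.2} := measurableSet_lt measurable_fst measurable_snd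
  have hS : MeasurableSet {w : ℝ × (ℝ × ℝ) | w.2.1 < w.2.2 ∧ F w.2.2 ≤ w.1 ∧ w.1 < G w.2.1} := by
    have m1 : MeasurableSet {w : ℝ × (ℝ × ℝ) | w.2.1 < w.2.2} :=
      measurableSet_lt (by fun_prop) (by fun_prop)
    have m2 : MeasurableSet {w : ℝ × (ℝ × ℝ) | F w.2.2 ≤ w.1} :=
      measurableSet_le (by fun_prop) (by fun_prop)
    have m3 : MeasurableSet {w : ℝ × (ℝ × ℝ) | w.1 < G w.2.1} :=
      measurableSet_lt (by fun_prop) (by fun_prop)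
    exact m1.inter (m2.inter m3)
  have hSu : ∀ u, MeasurableSet {q : ℝ × ℝ | q.1 < q.2 ∧ F q.2 ≤ u ∧ u < G q.1} := fun u =>
    measurable_prodMk_left hS
  have hfm : Measurable (fun w : ℝ × (ℝ × ℝ) =>
      {w : ℝ × (ℝ × ℝ) | w.2.1 < w.2.2 ∧ F w.2.2 ≤ w.1 ∧ w.1 < G w.2.1}.indicator
      (fun w => ENNReal.ofReal ((w.2.2 - w.2.1) ^ (p - 2))) w) :=
    Measurable.indicator (by fun_prop) hS
  have e1 : ∀ u ∈ Ioo (0:ℝ) 1, ENNReal.ofReal ((max (pinv F u - pinv G u) 0) ^ p)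
      = ENNReal.ofReal (p * (p - 1)) * ∫⁻ q : ℝ × ℝ,
        {w : ℝ × (ℝ × ℝ) | w.2.1 < w.2.2 ∧ F w.2.2 ≤ w.1 ∧ w.1 < G w.2.1}.indicator
          (fun w => ENNReal.ofReal ((w.2.2 - w.2.1) ^ (p - 2))) (u, q) := by
    intro u hu
    rw [← tri_integral p _ _ hp, ← setLIntegral_congr (slice_eq hF hG hFb hFt hGb hGt hu),
      ← lintegral_indicator (hSu u)]
    rfl
  rw [setLIntegral_congr_fun measurableSet_Ioo e1, lintegral_const_mul _ hfm.lintegral_prod_right',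
    lintegral_lintegral_swap hfm.aemeasurable, ← lintegral_indicator hlt]
  congr 1
  refine lintegral_congr fun q => ?_
  by_cases hq : q.1 < q.2
  · rw [indicator_of_mem (show q ∈ {q : ℝ × ℝ | q.1 < q.2} from hq)]
    have e2 : ∀ u, {w : ℝ × (ℝ × ℝ) | w.2.1 < w.2.2 ∧ F w.2.2 ≤ w.1 ∧ w.1 < G w.2.1}.indicator
          (fun w => ENNReal.ofReal ((w.2.2 - w.2.1) ^ (p - 2))) (u, q)
        = (Ico (F q.2) (G q.1)).indicator (fun _ => ENNReal.ofReal ((q.2 - q.1) ^ (p - 2))) u := by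
      intro u
      by_cases hu : u ∈ Ico (F q.2) (G q.1)
      · rw [indicator_of_mem hu, indicator_of_mem]
        exact ⟨hq, hu.1, hu.2⟩
      · rw [indicator_of_notMem hu, indicator_of_notMem]
        exact fun h => hu h.2
    simp_rw [e2]
    rw [setLIntegral_congr Ioo_ae_eq_Ico, lintegral_indicator measurableSet_Ico,
      Measure.restrict_restrict measurableSet_Ico, setLIntegral_const]
    have h0 : 0 ≤ F q.2 := hF.le_of_tendsto hFb _
    have h1 : G q.1 ≤ 1 := hG.ge_of_tendsto hGt _
    rw [inter_eq_left.2 (Ico_subset_Ico h0 h1), Real.volume_Ico,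
      ENNReal.ofReal_mul (le_max_right _ _), mul_comm]
    congr 1
    rcases le_total (G q.1 - F q.2) 0 with h | h
    · rw [max_eq_right h, ENNReal.ofReal_of_nonpos h, ENNReal.ofReal_zero]
    · rw [max_eq_left h]
  · rw [indicator_of_notMem (show q ∉ {q : ℝ × ℝ | q.1 < q.2} from hq)]
    rw [← lintegral_zero (μ := (volume : Measure ℝ).restrict (Ioo 0 1))]
    refine lintegral_congr fun u => ?_
    rw [indicator_of_notMem]
    exact fun h => hq h.1

theorem pinv_aemeasurable {F : ℝ → ℝ} (hF : Monotone F)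
    (hFb : Tendsto F atBot (𝓝 0)) (hFt : Tendsto F atTop (𝓝 1)) :
    AEMeasurable (pinv F) (volume.restrict (Ioo (0:ℝ) 1)) := by
  refine aemeasurable_restrict_of_monotoneOn measurableSet_Ioo ?_
  intro u hu v hv huv
  obtain ⟨z, hz⟩ := (hFt.eventually (lt_mem_nhds hv.2)).exists
  exact le_csInf ⟨z, hz⟩ fun w hw => pinv_le hFb hu.1 hF (lt_of_le_of_lt huv hw)

theorem cdfOf_eq (μ : Measure ℝ) [IsProbabilityMeasure μ] :
    cdfOf μ = ProbabilityTheory.cdf μ := by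
  ext x
  rw [ProbabilityTheory.cdf_eq_real]
  rfl

/-- For cdfs `F`, `G` of probability measures and `p > 1`, as an identity in `[0,∞]`:
`∫₀¹ |F⁻¹(u) - G⁻¹(u)|^p du
  = p(p-1) ∫∫_{x<y} ([G(x)-F(y)]⁺ + [F(x)-G(y)]⁺) (y-x)^{p-2} dx dy`. -/
theorem wasserstein_double_integral_formula
    (μ ν : Measure ℝ) [IsProbabilityMeasure μ] [IsProbabilityMeasure ν]
    (F G : ℝ → ℝ) (hF : F = cdfOf μ) (hG : G = cdfOf ν)
    (p : ℝ) (hp : 1 < p) :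
    (∫⁻ u in Set.Ioo (0:ℝ) 1, ENNReal.ofReal (|pinv F u - pinv G u| ^ p))
      = ENNReal.ofReal (p * (p - 1)) *
        ∫⁻ q in {q : ℝ × ℝ | q.1 < q.2},
          ENNReal.ofReal
            ((max (G q.1 - F q.2) 0 + max (F q.1 - G q.2) 0) * (q.2 - q.1) ^ (p - 2)) := by
  rw [cdfOf_eq] at hF hG
  have hFm : Monotone F := hF ▸ ProbabilityTheory.monotone_cdf μ
  have hGm : Monotone G := hG ▸ ProbabilityTheory.monotone_cdf ν
  have hFb : Tendsto F atBot (𝓝 0) := hF ▸ ProbabilityTheory.tendsto_cdf_atBot μ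
  have hGb : Tendsto G atBot (𝓝 0) := hG ▸ ProbabilityTheory.tendsto_cdf_atBot ν
  have hFt : Tendsto F atTop (𝓝 1) := hF ▸ ProbabilityTheory.tendsto_cdf_atTop μ
  have hGt : Tendsto G atTop (𝓝 1) := hG ▸ ProbabilityTheory.tendsto_cdf_atTop ν
  have hFmm := hFm.measurable
  have hGmm := hGm.measurable
  have hlt : MeasurableSet {q : ℝ × ℝ | q.1 < q.2} := measurableSet_lt measurable_fst measurable_snd
  have eL : ∀ u, ENNReal.ofReal (|pinv F u - pinv G u| ^ p)
      = ENNReal.ofReal ((max (pinv F u - pinv G u) 0) ^ p)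
        + ENNReal.ofReal ((max (pinv G u - pinv F u) 0) ^ p) := by
    intro u
    have hz : (0:ℝ) ^ p = 0 := Real.zero_rpow (by linarith)
    rcases le_total (pinv F u) (pinv G u) with h | h
    · rw [max_eq_right (by linarith), max_eq_left (by linarith), abs_sub_comm,
        abs_of_nonneg (by linarith), hz]
      simp
    · rw [max_eq_left (by linarith), max_eq_right (by linarith),
        abs_of_nonneg (by linarith), hz]
      simp
  have eR : ∀ q ∈ {q : ℝ × ℝ | q.1 < q.2}, ENNReal.ofReal
            ((max (G q.1 - F q.2) 0 + max (F q.1 - G q.2) 0) * (q.2 - q.1) ^ (p - 2))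
      = ENNReal.ofReal (max (G q.1 - F q.2) 0 * (q.2 - q.1) ^ (p - 2))
        + ENNReal.ofReal (max (F q.1 - G q.2) 0 * (q.2 - q.1) ^ (p - 2)) := by
    intro q hq
    have : 0 ≤ (q.2 - q.1) ^ (p - 2) := Real.rpow_nonneg (sub_nonneg.2 (le_of_lt hq)) _
    rw [add_mul, ENNReal.ofReal_add (by positivity) (by positivity)]
  have hmF := pinv_aemeasurable hFm hFb hFt
  have hmG := pinv_aemeasurable hGm hGb hGt
  simp_rw [eL]
  rw [setLIntegral_congr_fun hlt eR, lintegral_add_left' (by fun_prop),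
    lintegral_add_left (by fun_prop), mul_add,
    half_formula hFm hGm hFb hFt hGb hGt p hp, half_formula hGm hFm hGb hGt hFb hFt p hp]
end
end

section
/- Let n ≥ 1, p ≥ 1, and let (x₁,…,x_n) and (x'₁,…,x'_n) be vectors in ℝⁿ with respective increasing reorderings (y₁,…,y_n) and (y'₁,…,y'_n). Then Σ_{i=1}^n |y_i − y'_i|^p ≤ Σ_{i=1}^n |x_i − x'_i|^p. -/
open scoped BigOperators

noncomputable section

lemma convexOn_abs_rpow_aux (p : ℝ) (hp : 1 ≤ p) :
    ConvexOn ℝ Set.univ (fun z : ℝ => |z| ^ p) := by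
  refine ⟨convex_univ, ?_⟩
  intro x _ y _ a b ha hb hab
  have h := (convexOn_rpow hp).2 (Set.mem_Ici.2 (abs_nonneg x)) (Set.mem_Ici.2 (abs_nonneg y))
    ha hb hab
  refine le_trans ?_ h
  refine Real.rpow_le_rpow (abs_nonneg _) ?_ (by linarith)
  simp only [smul_eq_mul]
  refine (abs_add_le _ _).trans ?_
  rw [abs_mul, abs_mul, abs_of_nonneg ha, abs_of_nonneg hb]

lemma exchange_aux (f : ℝ → ℝ) (hf : ConvexOn ℝ Set.univ f) (u v s t : ℝ)
    (huv : u ≤ v) (hst : s ≤ t) :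
    f (u - s) + f (v - t) ≤ f (u - t) + f (v - s) := by
  rcases eq_or_lt_of_le hst with rfl | hst'
  · linarith
  have hd : 0 < (v - u) + (t - s) := by linarith
  set l := (t - s) / ((v - u) + (t - s)) with hl
  set m := (v - u) / ((v - u) + (t - s)) with hm
  have hl0 : 0 ≤ l := div_nonneg (by linarith) hd.le
  have hm0 : 0 ≤ m := div_nonneg (by linarith) hd.le
  have hlm : l + m = 1 := by rw [hl, hm]; field_simp; ring
  have hle : l * ((v - u) + (t - s)) = t - s := by rw [hl]; field_simp
  have h1 := hf.2 (Set.mem_univ (u - t)) (Set.mem_univ (v - s)) hl0 hm0 hlm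
  have h2 := hf.2 (Set.mem_univ (u - t)) (Set.mem_univ (v - s)) hm0 hl0 (by linarith)
  simp only [smul_eq_mul] at h1 h2
  have hm' : m = 1 - l := by linarith
  have e1 : l * (u - t) + m * (v - s) = v - t := by rw [hm']; linarith
  have e2 : m * (u - t) + l * (v - s) = u - s := by rw [hm']; linarith
  rw [e1] at h1
  rw [e2] at h2
  have : l * f (u - t) + m * f (v - s) + (m * f (u - t) + l * f (v - s))
      = f (u - t) + f (v - s) := by rw [hm']; ring
  linarith

lemma sorted_le_perm_aux (f : ℝ → ℝ) (hf : ConvexOn ℝ Set.univ f) (n : ℕ) :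
    ∀ (a b : Fin n → ℝ), Monotone a → Monotone b → ∀ τ : Equiv.Perm (Fin n),
      ∑ i, f (a i - b i) ≤ ∑ i, f (a i - b (τ i)) := by
  induction n with
  | zero => intro a b _ _ τ; simp
  | succ n ih =>
    intro a b ha hb τ
    obtain ⟨⟨p, e⟩, rfl⟩ := Equiv.Perm.decomposeFin.symm.surjective τ
    have key := ih (fun i => a i.succ) (fun i => b i.succ)
      (fun i j h => ha (Fin.succ_le_succ_iff.2 h)) (fun i j h => hb (Fin.succ_le_succ_iff.2 h)) e
    rw [Fin.sum_univ_succ, Fin.sum_univ_succ]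
    simp only [Equiv.Perm.decomposeFin_symm_apply_zero, Equiv.Perm.decomposeFin_symm_apply_succ]
    rcases Fin.eq_zero_or_eq_succ p with rfl | ⟨q, rfl⟩
    · simpa using key
    · have hsum : ∑ i, f (a i.succ - b (Equiv.swap 0 q.succ (e i).succ))
          - ∑ i, f (a i.succ - b (e i).succ)
          = f (a (e.symm q).succ - b 0) - f (a (e.symm q).succ - b q.succ) := by
        rw [← Finset.sum_sub_distrib, Finset.sum_eq_single (e.symm q)]
        · simp
        · intro i _ hi
          have hne : e i ≠ q := fun h => hi (by simp [← h])
          rw [Equiv.swap_apply_of_ne_of_ne (Fin.succ_ne_zero _)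
            (fun h => hne (Fin.succ_injective _ h))]
          simp
        · simp
      have hx := exchange_aux f hf (a 0) (a (e.symm q).succ) (b 0) (b q.succ)
        (ha (Fin.zero_le _)) (hb (Fin.zero_le _))
      linarith

/-- The increasing reordering contracts the `ℓ^p` distance: if `y` and `y'` are the
nondecreasing reorderings of `x` and `x'`, then `Σ |yᵢ - y'ᵢ|^p ≤ Σ |xᵢ - x'ᵢ|^p`. -/
theorem increasing_reordering_contraction
    (n : ℕ) (hn : 1 ≤ n) (p : ℝ) (hp : 1 ≤ p)
    (x x' y y' : Fin n → ℝ)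
    (σ : Equiv.Perm (Fin n)) (hy : y = x ∘ σ) (hymono : Monotone y)
    (σ' : Equiv.Perm (Fin n)) (hy' : y' = x' ∘ σ') (hy'mono : Monotone y') :
    ∑ i : Fin n, |y i - y' i| ^ p ≤ ∑ i : Fin n, |x i - x' i| ^ p := by
  have h := sorted_le_perm_aux _ (convexOn_abs_rpow_aux p hp) n y y' hymono hy'mono
    (σ.trans σ'.symm)
  refine h.trans (le_of_eq ?_)
  rw [← Equiv.sum_comp σ (fun i => |x i - x' i| ^ p)]
  simp [hy, hy']
end
end

section
/- Assume the uniform ellipticity condition (D3) and the regularity condition (R1), and let F₀ be a cumulative distribution function with finite first moment. Let F be the unique weak solution in 𝓕 of the Cauchy problem with initial condition F₀. Assume moreover that F has classical regularity (F is C^{1,2} on (0,∞)×ℝ and solves the Cauchy problem pointwise there) and that for all 0 < t₁ < t₂ the function (t,x) ↦ ∂_x F_t(x) is bounded on [t₁,t₂]×ℝ. Then the pseudo-inverse function (t,u) ↦ F_t^{-1}(u) is C^{1,2} on (0,∞)×(0,1) and satisfies ∂_t F_t^{-1}(u) = b(u) − (1/2) ∂_u ( a(u) / ∂_u F_t^{-1}(u)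 ) there. -/
open MeasureTheory Set Filter Topology Function
open scoped ENNReal

noncomputable section

/-- Tail function `tl(f,x) = 1_{x ≥ 0} (1 - f(x)) + 1_{x ≤ 0} f(x)`. -/
def tl (f : ℝ → ℝ) (x : ℝ) : ℝ :=
  (if 0 ≤ x then 1 - f x else 0) + (if x ≤ 0 then f x else 0)

/-- `F` has the classical regularity: it is `C^{1,2}` on `(0,∞) × ℝ` and solves the
Cauchy problem `∂ₜ F = (1/2) ∂ₓₓ (A(F)) - ∂ₓ (B(F))` in the classical sense there. -/
def HasClassicalRegularity (a b : ℝ → ℝ) (F : ℝ → ℝ → ℝ) : Prop :=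
  ∃ Ft Fx Fxx : ℝ → ℝ → ℝ,
    (∀ t : ℝ, 0 < t → ∀ x : ℝ,
      HasDerivAt (fun s => F s x) (Ft t x) t ∧
      HasDerivAt (fun y => F t y) (Fx t x) x ∧
      HasDerivAt (fun y => Fx t y) (Fxx t x) x) ∧
    ContinuousOn (fun q : ℝ × ℝ => F q.1 q.2) (Set.Ioi 0 ×ˢ (Set.univ : Set ℝ)) ∧
    ContinuousOn (fun q : ℝ × ℝ => Ft q.1 q.2) (Set.Ioi 0 ×ˢ (Set.univ : Set ℝ)) ∧
    ContinuousOn (fun q : ℝ × ℝ => Fx q.1 q.2) (Set.Ioi 0 ×ˢ (Set.univ : Set ℝ)) ∧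
    ContinuousOn (fun q : ℝ × ℝ => Fxx q.1 q.2) (Set.Ioi 0 ×ˢ (Set.univ : Set ℝ)) ∧
    (∀ t : ℝ, 0 < t → ∀ x : ℝ,
      Ft t x = (1/2) * deriv (fun y => deriv (fun z => primitive a (F t z)) y) x
        - deriv (fun y => primitive b (F t y)) x)


lemma aux_second {f f' : ℝ → ℝ} {f'' x : ℝ} (hmin : IsLocalMin f x)
    (h1 : ∀ y, HasDerivAt f (f' y) y) (h2 : HasDerivAt f' f'' x) : f' x = 0 ∧ 0 ≤ f'' := by
  have h0 : f' x = 0 := hmin.hasDerivAt_eq_zero (h1 x)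
  refine ⟨h0, ?_⟩
  by_contra hneg
  push Not at hneg
  have hd : deriv f = f' := funext fun y => (h1 y).deriv
  have hmax : IsLocalMax f x := by
    apply isLocalMax_of_deriv_deriv_neg
    · rw [hd, h2.deriv]; exact hneg
    · rw [hd]; exact h0
    · exact (h1 x).continuousAt
  have heq : ∀ᶠ y in 𝓝 x, f y = f x := by
    filter_upwards [hmin, hmax] with y ha hb using le_antisymm hb ha
  have heq' : ∀ᶠ y in 𝓝 x, f' y = 0 := by
    filter_upwards [heq.eventually_nhds] with y hy
    have : HasDerivAt f 0 y := (hasDerivAt_const y (f x)).congr_of_eventuallyEq hy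
    exact (h1 y).unique this
  have : HasDerivAt f' 0 x := (hasDerivAt_const x (0:ℝ)).congr_of_eventuallyEq heq'
  have := h2.unique this
  linarith

lemma aux_time {f : ℝ → ℝ} {f' t : ℝ}
    (hmin : ∀ᶠ s in 𝓝[<] t, f t ≤ f s) (h : HasDerivAt f f' t) : f' ≤ 0 := by
  have h1 : Tendsto (slope f t) (𝓝[<] t) (𝓝 f') :=
    (hasDerivAt_iff_tendsto_slope.1 h).mono_left (nhdsWithin_mono _ (fun y hy => ne_of_lt hy))
  refine le_of_tendsto h1 ?_
  filter_upwards [hmin, self_mem_nhdsWithin] with s hs hs'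
  rw [slope_def_field]
  exact div_nonpos_of_nonneg_of_nonpos (by linarith) (by have : s < t := hs'; linarith)

lemma aux_alg (K k C c C1 σ η p q ax ay bx b_y : ℝ) (hc : 0 < c) (hσ : 0 ≤ σ) (hC : 0 ≤ C)
    (hη : η = 2 - p^2 - q^2) (hη0 : 0 ≤ η)
    (hC1 : C1 = 8*σ+12*C) (hk : k = (C1+1)/(16*c)) (hK : K = 2*k*C1+8*k*c)
    (hax : c ≤ ax) (hax' : ax ≤ C) (hay : c ≤ ay) (hay' : ay ≤ C)
    (hbx : |bx| ≤ C) (hby : |b_y| ≤ C) :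
    -K*(η+k*η^2) + (1+2*k*η)*(-2*p*σ+2*q*σ)
     - (ax * ((1+2*k*η)*(-2) + 2*k*(-2*p)^2) + bx*((1+2*k*η)*(-2*p)))
     - (ay * ((1+2*k*η)*(-2) + 2*k*(-2*q)^2) + b_y*((1+2*k*η)*(-2*q))) < 0 := by
  have hC1n : 0 ≤ C1 := by rw [hC1]; positivity
  have hkp : 0 < k := by rw [hk]; positivity
  have hkc : 16*k*c = C1+1 := by rw [hk]; field_simp
  have hp : |p| ≤ 2 := abs_le_of_sq_le_sq (by nlinarith [sq_nonneg q]) (by norm_num)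
  have hq : |q| ≤ 2 := abs_le_of_sq_le_sq (by nlinarith [sq_nonneg p]) (by norm_num)
  have e1 : bx * p ≤ 2*C := by
    calc bx*p ≤ |bx*p| := le_abs_self _
      _ = |bx| * |p| := abs_mul _ _
      _ ≤ C*2 := mul_le_mul hbx hp (abs_nonneg _) hC
      _ = 2*C := by ring
  have e2 : b_y * q ≤ 2*C := by
    calc b_y*q ≤ |b_y*q| := le_abs_self _
      _ = |b_y| * |q| := abs_mul _ _
      _ ≤ C*2 := mul_le_mul hby hq (abs_nonneg _) hC
      _ = 2*C := by ring
  have e3 : -p*σ ≤ 2*σ := mul_le_mul_of_nonneg_right (by linarith [(abs_le.1 hp).1]) hσ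
  have e4 : q*σ ≤ 2*σ := mul_le_mul_of_nonneg_right (abs_le.1 hq).2 hσ
  have hQ : (-2*p*σ+2*q*σ) + 2*ax+2*ay+2*(bx*p)+2*(b_y*q) ≤ C1 := by rw [hC1]; nlinarith
  have h1 : (1+2*k*η)*((-2*p*σ+2*q*σ) + 2*ax+2*ay+2*(bx*p)+2*(b_y*q)) ≤ (1+2*k*η)*C1 :=
    mul_le_mul_of_nonneg_left hQ (by positivity)
  have h2 : c*(2-η) ≤ ax*p^2+ay*q^2 := by
    have := mul_le_mul_of_nonneg_right hax (sq_nonneg p)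
    have := mul_le_mul_of_nonneg_right hay (sq_nonneg q)
    rw [hη]; nlinarith
  have h3 : 8*k*(c*(2-η)) ≤ 8*k*(ax*p^2+ay*q^2) := mul_le_mul_of_nonneg_left h2 (by positivity)
  have hKn : 0 ≤ K := by rw [hK]; positivity
  have h4 : 0 ≤ K*(k*η^2) := by positivity
  have h5 : K*η = (2*k*C1+8*k*c)*η := by rw [hK]
  nlinarith

set_option maxHeartbeats 1000000 in
/-- Hopf-type lemma. -/
lemma aux_hopf (F Ft Fx Fxx α β : ℝ → ℝ → ℝ) (t1 t0 x0 m c C δ : ℝ)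
    (ht : t1 < t0) (hm : 1 ≤ m) (hc : 0 < c) (hδ : 0 < δ)
    (hd : ∀ t ∈ Icc t1 t0, ∀ x : ℝ,
      HasDerivAt (fun s => F s x) (Ft t x) t ∧
      HasDerivAt (fun y => F t y) (Fx t x) x ∧
      HasDerivAt (fun y => Fx t y) (Fxx t x) x)
    (hcont : ContinuousOn (fun q : ℝ × ℝ => F q.1 q.2) (Icc t1 t0 ×ˢ (Set.univ : Set ℝ)))
    (hpde : ∀ t ∈ Icc t1 t0, ∀ x, Ft t x = α t x * Fxx t x + β t x * Fx t x)
    (hα : ∀ t ∈ Icc t1 t0, ∀ x, c ≤ α t x ∧ α t x ≤ C)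
    (hβ : ∀ t ∈ Icc t1 t0, ∀ x, |β t x| ≤ C)
    (hmono : ∀ t ∈ Icc t1 t0, Monotone (F t))
    (hstart : ∀ x y, x0 + m - 2 ≤ x → y ≤ x0 - m + 2 → δ ≤ F t1 x - F t1 y) :
    0 < Fx t0 x0 := by
  have ht01 : t1 ∈ Icc t1 t0 := ⟨le_rfl, ht.le⟩
  have ht00 : t0 ∈ Icc t1 t0 := ⟨ht.le, le_rfl⟩
  have hC : 0 ≤ C := (abs_nonneg _).trans (hβ t0 ht00 0)
  obtain ⟨σ, hσd⟩ : ∃ σ, σ = (m-1)/(t0-t1) := ⟨_, rfl⟩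
  have hσ : 0 ≤ σ := by rw [hσd]; exact div_nonneg (by linarith) (by linarith)
  have hσ1 : σ*(t0-t1) = m-1 := by rw [hσd]; field_simp [sub_ne_zero.2 ht.ne']
  obtain ⟨C1, hC1⟩ : ∃ C1, C1 = 8*σ+12*C := ⟨_, rfl⟩
  have hC1n : 0 ≤ C1 := by rw [hC1]; positivity
  obtain ⟨k, hk⟩ : ∃ k, k = (C1+1)/(16*c) := ⟨_, rfl⟩
  have hkp : 0 < k := by rw [hk]; positivity
  obtain ⟨K, hK⟩ : ∃ K, K = 2*k*C1+8*k*c := ⟨_, rfl⟩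
  have hKn : 0 ≤ K := by rw [hK]; positivity
  let P : ℝ → ℝ → ℝ := fun t x => x - x0 - (m - σ*(t-t1))
  let Q : ℝ → ℝ → ℝ := fun t y => y - x0 + (m - σ*(t-t1))
  let η : ℝ → ℝ → ℝ → ℝ := fun t x y => 2 - (P t x)^2 - (Q t y)^2
  let E : ℝ → ℝ := fun t => Real.exp (-K*(t-t1))
  obtain ⟨ε, hε⟩ : ∃ ε, ε = δ/(2+4*k) := ⟨_, rfl⟩
  have hεp : 0 < ε := by rw [hε]; positivity
  have hεδ : ε*(2+4*k) = δ := by rw [hε]; field_simp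
  let w : ℝ → ℝ → ℝ → ℝ := fun t x y => E t * (η t x y + k * (η t x y)^2)
  let V : ℝ → ℝ → ℝ → ℝ := fun t x y => F t x - F t y - ε * w t x y
  have hE : ∀ t, 0 < E t := fun t => Real.exp_pos _
  have hPQ : ∀ t x y, 0 ≤ η t x y → |P t x| ≤ 2 ∧ |Q t y| ≤ 2 := by
    intro t x y h
    simp only [η] at h
    exact ⟨abs_le_of_sq_le_sq (by linarith only [sq_nonneg (Q t y), h]) (by norm_num),
      abs_le_of_sq_le_sq (by linarith only [sq_nonneg (P t x), h]) (by norm_num)⟩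
  let Ω : Set (ℝ × ℝ × ℝ) := {z | z.1 ∈ Icc t1 t0 ∧ 0 ≤ η z.1 z.2.1 z.2.2}
  have hηc : Continuous (fun z : ℝ × ℝ × ℝ => η z.1 z.2.1 z.2.2) := by
    simp only [η, P, Q]; fun_prop
  have hEc : Continuous E := by simp only [E]; fun_prop
  have hs : ∀ t ∈ Icc t1 t0, 1 ≤ m - σ*(t-t1) ∧ m - σ*(t-t1) ≤ m := by
    intro t h
    have := mul_le_mul_of_nonneg_left (sub_le_sub_right h.2 t1) hσ
    have := mul_nonneg hσ (sub_nonneg.2 h.1)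
    constructor <;> linarith
  have hΩ : IsCompact Ω := by
    apply IsCompact.of_isClosed_subset
      ((isCompact_Icc (a := t1) (b := t0)).prod ((isCompact_Icc (a := x0-m-2) (b := x0+m+2)).prod
        (isCompact_Icc (a := x0-m-2) (b := x0+m+2))))
    · exact (isClosed_Icc.preimage continuous_fst).inter (isClosed_le continuous_const hηc)
    · rintro ⟨t, x, y⟩ ⟨h1, h2⟩
      obtain ⟨h3, h4⟩ := hPQ _ _ _ h2
      obtain ⟨h5, h6⟩ := hs t h1
      simp only [P, Q, abs_le] at h3 h4
      refine ⟨h1, ⟨?_, ?_⟩, ⟨?_, ?_⟩⟩ <;> dsimp only <;> linarith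
  have hVc : ContinuousOn (fun z : ℝ × ℝ × ℝ => V z.1 z.2.1 z.2.2) Ω := by
    have c1 : ContinuousOn (fun z : ℝ × ℝ × ℝ => F z.1 z.2.1) Ω :=
      hcont.comp (f := fun z : ℝ × ℝ × ℝ => (z.1, z.2.1)) (by fun_prop) (fun z hz => ⟨hz.1, trivial⟩)
    have c2 : ContinuousOn (fun z : ℝ × ℝ × ℝ => F z.1 z.2.2) Ω :=
      hcont.comp (f := fun z : ℝ × ℝ × ℝ => (z.1, z.2.2)) (by fun_prop) (fun z hz => ⟨hz.1, trivial⟩)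
    have c3 : Continuous (fun z : ℝ × ℝ × ℝ => ε * w z.1 z.2.1 z.2.2) := by
      simp only [w]; fun_prop
    exact (c1.sub c2).sub c3.continuousOn
  have key : ∀ z ∈ Ω, 0 ≤ V z.1 z.2.1 z.2.2 := by
    by_contra hcon
    push Not at hcon
    obtain ⟨z', hz', hneg'⟩ := hcon
    obtain ⟨⟨t, x, y⟩, hz, hmin⟩ := hΩ.exists_isMinOn ⟨z', hz'⟩ hVc
    have hneg : V t x y < 0 := lt_of_le_of_lt (hmin hz') hneg'
    have hmin' : ∀ s x' y', s ∈ Icc t1 t0 → 0 ≤ η s x' y' → V t x y ≤ V s x' y' :=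
      fun s x' y' h1 h2 => hmin (show (s, x', y') ∈ Ω from ⟨h1, h2⟩)
    obtain ⟨htI, hη0⟩ := hz
    dsimp only at htI hη0
    obtain ⟨hp, hq⟩ := hPQ _ _ _ hη0
    have hsI := hs t htI
    have hxy : y ≤ x := by
      have h1 : (P t x - Q t y)^2 ≤ 2^2 := by
        simp only [η] at hη0
        nlinarith only [sq_nonneg (P t x + Q t y), hη0]
      have := abs_le.1 (abs_le_of_sq_le_sq h1 (by norm_num))
      simp only [P, Q] at this
      linarith only [this.1, hsI.1]
    have hη2 : η t x y ≤ 2 := by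
      simp only [η]; linarith only [sq_nonneg (P t x), sq_nonneg (Q t y)]
    have hηpos : 0 < η t x y := by
      rcases hη0.lt_or_eq with h | h
      · exact h
      · exfalso
        have : V t x y = F t x - F t y := by simp only [V, w, ← h]; ring
        have := hmono t htI hxy
        linarith
    have htpos : t1 < t := by
      rcases htI.1.lt_or_eq with h | h
      · exact h
      · exfalso
        subst h
        have h1 : δ ≤ F t1 x - F t1 y := by
          apply hstart
          · simp only [P, abs_le, sub_self, mul_zero] at hp; linarith only [hp.1]
          · simp only [Q, abs_le, sub_self, mul_zero] at hq; linarith only [hq.2]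
        have h2 : w t1 x y ≤ 2+4*k := by
          have : E t1 = 1 := by simp [E]
          simp only [w, this]
          have h6 : (η t1 x y)^2 ≤ 4 := by nlinarith only [hη2, hη0]
          have h7 := mul_le_mul_of_nonneg_left h6 hkp.le
          linarith only [h7, hη2]
        have h3 : ε * w t1 x y ≤ ε*(2+4*k) := mul_le_mul_of_nonneg_left h2 hεp.le
        simp only [V] at hneg
        linarith
    obtain ⟨dFt, dFx, dFxx⟩ := hd t htI x
    obtain ⟨dFt', dFy, dFyy⟩ := hd t htI y
    have dPt : ∀ s, HasDerivAt (fun s => P s x) σ s := by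
      intro s
      have := (((hasDerivAt_id s).sub_const t1).const_mul σ).const_sub m |>.const_sub (x - x0)
      simpa [P] using this
    have dQt : ∀ s, HasDerivAt (fun s => Q s y) (-σ) s := by
      intro s
      have := (((hasDerivAt_id s).sub_const t1).const_mul σ).const_sub m |>.const_add (y - x0)
      simpa [Q] using this
    have dPx : ∀ x', HasDerivAt (fun x' => P t x') 1 x' := by
      intro x'
      simpa [P] using ((hasDerivAt_id x').sub_const x0).sub_const (m - σ*(t-t1))
    have dQy : ∀ y', HasDerivAt (fun y' => Q t y') 1 y' := by
      intro y'
      simpa [Q] using ((hasDerivAt_id y').sub_const x0).add_const (m - σ*(t-t1))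
    have dηt : HasDerivAt (fun s => η s x y) (-2*P t x*σ + 2*Q t y*σ) t := by
      have := ((dPt t).fun_pow 2).const_sub 2 |>.fun_sub ((dQt t).fun_pow 2)
      refine this.congr_deriv ?_
      push_cast; ring
    have dηx : ∀ x', HasDerivAt (fun x' => η t x' y) (-2*P t x') x' := by
      intro x'
      have := ((dPx x').fun_pow 2).const_sub 2 |>.sub_const ((Q t y)^2)
      refine this.congr_deriv ?_
      push_cast; ring
    have dηy : ∀ y', HasDerivAt (fun y' => η t x y') (-2*Q t y') y' := by
      intro y'
      have := ((dQy y').fun_pow 2).const_sub (2 - (P t x)^2)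
      refine this.congr_deriv ?_
      push_cast; ring
    have dE : HasDerivAt E (-K * E t) t := by
      have := (((hasDerivAt_id t).sub_const t1).const_mul (-K)).exp
      refine this.congr_deriv ?_
      simp only [E, id]; ring
    have dwt : HasDerivAt (fun s => w s x y) (E t * (-K*(η t x y+k*(η t x y)^2)
        + (1+2*k*η t x y)*(-2*P t x*σ+2*Q t y*σ))) t := by
      have := dE.fun_mul (dηt.fun_add ((dηt.fun_pow 2).const_mul k))
      refine this.congr_deriv ?_
      push_cast; ring
    have dwx : ∀ x', HasDerivAt (fun x' => w t x' y) (E t * ((1+2*k*η t x' y)*(-2*P t x'))) x' := by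
      intro x'
      have := ((dηx x').fun_add (((dηx x').fun_pow 2).const_mul k)).const_mul (E t)
      refine this.congr_deriv ?_
      push_cast; ring
    have dwy : ∀ y', HasDerivAt (fun y' => w t x y') (E t * ((1+2*k*η t x y')*(-2*Q t y'))) y' := by
      intro y'
      have := ((dηy y').fun_add (((dηy y').fun_pow 2).const_mul k)).const_mul (E t)
      refine this.congr_deriv ?_
      push_cast; ring
    have dwxx : HasDerivAt (fun x' => E t * ((1+2*k*η t x' y)*(-2*P t x')))
        (E t * ((1+2*k*η t x y)*(-2) + 2*k*(-2*P t x)^2)) x := by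
      have := ((((dηx x).const_mul (2*k)).const_add 1).fun_mul ((dPx x).const_mul (-2))).const_mul (E t)
      refine this.congr_deriv ?_
      ring
    have dwyy : HasDerivAt (fun y' => E t * ((1+2*k*η t x y')*(-2*Q t y')))
        (E t * ((1+2*k*η t x y)*(-2) + 2*k*(-2*Q t y)^2)) y := by
      have := ((((dηy y).const_mul (2*k)).const_add 1).fun_mul ((dQy y).const_mul (-2))).const_mul (E t)
      refine this.congr_deriv ?_
      ring
    have cx : Continuous (fun x' => η t x' y) := by simp only [η, P, Q]; fun_prop
    have cy : Continuous (fun y' => η t x y') := by simp only [η, P, Q]; fun_prop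
    have ct : Continuous (fun s => η s x y) := by simp only [η, P, Q]; fun_prop
    have mx : IsLocalMin (fun x' => V t x' y) x := by
      filter_upwards [cx.continuousAt.eventually (lt_mem_nhds hηpos)] with x' hx'
      exact hmin' _ _ _ htI (le_of_lt hx')
    have my : IsLocalMin (fun y' => V t x y') y := by
      filter_upwards [cy.continuousAt.eventually (lt_mem_nhds hηpos)] with y' hy'
      exact hmin' _ _ _ htI (le_of_lt hy')
    have mt : ∀ᶠ s in 𝓝[<] t, V t x y ≤ V s x y := by
      filter_upwards [nhdsWithin_le_nhds (ct.continuousAt.eventually (lt_mem_nhds hηpos)),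
        Ioo_mem_nhdsLT htpos] with s h1 h2
      exact hmin' _ _ _ ⟨h2.1.le, h2.2.le.trans htI.2⟩ (le_of_lt h1)
    have rt := aux_time (f := fun s => V s x y) mt ((dFt.fun_sub dFt').fun_sub (dwt.const_mul ε))
    obtain ⟨rx, rxx⟩ := aux_second mx
      (fun x' => ((hd t htI x').2.1.sub_const (F t y)).fun_sub ((dwx x').const_mul ε))
      (dFxx.fun_sub (dwxx.const_mul ε))
    obtain ⟨ry, ryy⟩ := aux_second my
      (fun y' => (((hd t htI y').2.1.const_sub (F t x)).fun_sub ((dwy y').const_mul ε)))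
      (dFyy.fun_neg.fun_sub (dwyy.const_mul ε))
    have alg := aux_alg K k C c C1 σ (η t x y) (P t x) (Q t y) (α t x) (α t y) (β t x) (β t y)
      hc hσ hC rfl hη0 hC1 hk hK (hα t htI x).1 (hα t htI x).2 (hα t htI y).1 (hα t htI y).2
      (hβ t htI x) (hβ t htI y)
    have alg' := mul_neg_of_pos_of_neg (mul_pos hεp (hE t)) alg
    have hαx : 0 ≤ α t x := hc.le.trans (hα t htI x).1
    have hαy : 0 ≤ α t y := hc.le.trans (hα t htI y).1
    have m1 := mul_nonneg hαx rxx
    have m2 := mul_nonneg hαy ryy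
    have m3 := congrArg (fun r => β t x * r) rx
    have m4 := congrArg (fun r => β t y * r) ry
    rw [hpde t htI x, hpde t htI y] at rt
    simp only [mul_zero] at m3 m4
    linarith only [m1, m2, m3, m4, rt, alg']
  have hfin : ∀ h ∈ Ioo (0:ℝ) 1, 2*(ε * E t0) ≤ (F t0 (x0+h) - F t0 (x0-h))/h := by
    intro h hh
    have e1 : P t0 (x0+h) = h-1 := by simp only [P]; linarith
    have e2 : Q t0 (x0-h) = 1-h := by simp only [Q]; linarith
    have e3 : η t0 (x0+h) (x0-h) = 4*h-2*h^2 := by simp only [η, e1, e2]; ring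
    have e4 : 2*h ≤ η t0 (x0+h) (x0-h) := by rw [e3]; nlinarith only [hh.1, hh.2]
    have := key (t0, x0+h, x0-h) ⟨ht00, by dsimp only; linarith [hh.1]⟩
    simp only [V, w] at this
    rw [le_div_iff₀ hh.1]
    have h5 : 2*h ≤ η t0 (x0+h) (x0-h) + k*(η t0 (x0+h) (x0-h))^2 := by
      have : 0 ≤ k*(η t0 (x0+h) (x0-h))^2 := by positivity
      linarith
    have := mul_le_mul_of_nonneg_left h5 (mul_pos hεp (hE t0)).le
    linarith
  have hdd : HasDerivAt (fun h => F t0 (x0+h) - F t0 (x0-h)) (2 * Fx t0 x0) 0 := by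
    have h1 : HasDerivAt (fun h => F t0 (x0+h)) (Fx t0 x0) 0 :=
      HasDerivAt.comp_const_add x0 0 (by simpa using (hd t0 ht00 x0).2.1)
    have h2 : HasDerivAt (fun h => F t0 (x0-h)) (-Fx t0 x0) 0 :=
      HasDerivAt.comp_const_sub x0 0 (by simpa using (hd t0 ht00 x0).2.1)
    refine (h1.fun_sub h2).congr_deriv (by ring)
  have hsl : Tendsto (slope (fun h => F t0 (x0+h) - F t0 (x0-h)) 0) (𝓝[>] 0) (𝓝 (2 * Fx t0 x0)) :=
    (hasDerivAt_iff_tendsto_slope.1 hdd).mono_left (nhdsWithin_mono _ (fun y hy => ne_of_gt hy))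
  have : 2*(ε * E t0) ≤ 2 * Fx t0 x0 := by
    refine ge_of_tendsto hsl ?_
    filter_upwards [Ioo_mem_nhdsGT (zero_lt_one' ℝ)] with h hh
    have := hfin h hh
    simpa [slope_def_field] using this
  have := mul_pos hεp (hE t0)
  linarith

/-- The equation in non-divergence form. -/
lemma aux_nondiv (a : ℝ → ℝ) (hR1 : ContDiffOn ℝ 1 a (Set.Icc 0 1)) (f f' : ℝ → ℝ) (f'' x : ℝ)
    (hf : ∀ y, f y ∈ Icc (0:ℝ) 1) (h1 : ∀ y, HasDerivAt f (f' y) y) (h2 : HasDerivAt f' f'' x) :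
    deriv (fun y => deriv (fun z => primitive a (f z)) y) x
      = derivWithin a (Icc 0 1) (f x) * f' x * f' x + a (f x) * f'' := by
  have hA : ∀ (g : ℝ → ℝ), ContinuousOn g (Icc 0 1) → ∀ u ∈ Icc (0:ℝ) 1,
      HasDerivWithinAt (primitive g) (g u) (Icc 0 1) u := by
    intro g hg u hu
    have hc : Continuous (IccExtend zero_le_one ((Icc (0:ℝ) 1).domRestrict g)) :=
      (continuousOn_iff_continuous_domRestrict.1 hg).Icc_extend'
    have hi : ∀ v ∈ Icc (0:ℝ) 1, IccExtend zero_le_one ((Icc (0:ℝ) 1).domRestrict g) v = g v := by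
      intro v hv
      rw [IccExtend_of_mem _ _ hv]; rfl
    have h := (intervalIntegral.integral_hasDerivAt_right (hc.intervalIntegrable 0 u)
      hc.stronglyMeasurable.stronglyMeasurableAtFilter hc.continuousAt).hasDerivWithinAt (s := Icc 0 1)
    rw [hi u hu] at h
    have heq : ∀ v ∈ Icc (0:ℝ) 1, primitive g v = ∫ w in (0:ℝ)..v, IccExtend zero_le_one ((Icc (0:ℝ) 1).domRestrict g) w := by
      intro v hv
      apply intervalIntegral.integral_congr
      intro w hw
      rw [uIcc_of_le hv.1] at hw
      exact (hi w ⟨hw.1, hw.2.trans hv.2⟩).symm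
    exact h.congr heq (heq u hu)
  have d1 : (fun y => deriv (fun z => primitive a (f z)) y) = fun y => a (f y) * f' y := by
    funext y
    have := (hA a hR1.continuousOn (f y) (hf y)).comp y (h1 y).hasDerivWithinAt
      (s := univ) (fun z _ => hf z)
    exact (hasDerivWithinAt_univ.1 this).deriv
  rw [d1]
  have d2 : HasDerivAt (fun y => a (f y)) (derivWithin a (Icc 0 1) (f x) * f' x) x := by
    have := ((hR1.differentiableOn (by norm_num)) (f x) (hf x)).hasDerivWithinAt.comp x
      (h1 x).hasDerivWithinAt (s := univ) (fun z _ => hf z)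
    exact hasDerivWithinAt_univ.1 this
  exact (d2.fun_mul h2).deriv

lemma aux_prim (g : ℝ → ℝ) (hg : ContinuousOn g (Icc 0 1)) (f : ℝ → ℝ) (f' x : ℝ)
    (hf : ∀ y, f y ∈ Icc (0:ℝ) 1) (h1 : HasDerivAt f f' x) :
    deriv (fun z => primitive g (f z)) x = g (f x) * f' := by
  have hc : Continuous (IccExtend zero_le_one ((Icc (0:ℝ) 1).domRestrict g)) :=
    (continuousOn_iff_continuous_domRestrict.1 hg).Icc_extend'
  have hi : ∀ v ∈ Icc (0:ℝ) 1, IccExtend zero_le_one ((Icc (0:ℝ) 1).domRestrict g) v = g v := by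
    intro v hv
    rw [IccExtend_of_mem _ _ hv]; rfl
  have h := (intervalIntegral.integral_hasDerivAt_right (hc.intervalIntegrable 0 (f x))
    hc.stronglyMeasurable.stronglyMeasurableAtFilter hc.continuousAt)
  rw [hi _ (hf x)] at h
  have heq : ∀ v ∈ Icc (0:ℝ) 1, primitive g v = ∫ w in (0:ℝ)..v, IccExtend zero_le_one ((Icc (0:ℝ) 1).domRestrict g) w := by
    intro v hv
    apply intervalIntegral.integral_congr
    intro w hw
    rw [uIcc_of_le hv.1] at hw
    exact (hi w ⟨hw.1, hw.2.trans hv.2⟩).symm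
  have h3 := h.comp x h1
  have : (fun z => primitive g (f z)) = (fun u => ∫ w in (0:ℝ)..u, IccExtend zero_le_one ((Icc (0:ℝ) 1).domRestrict g) w) ∘ f :=
    funext fun z => heq _ (hf z)
  rw [this]
  exact h3.deriv

/-- Purely analytic part: the inverse of a family of increasing bijections. -/
lemma aux_inverse (F Ft Fx Fxx : ℝ → ℝ → ℝ)
    (hd : ∀ t : ℝ, 0 < t → ∀ x : ℝ,
      HasDerivAt (fun s => F s x) (Ft t x) t ∧
      HasDerivAt (fun y => F t y) (Fx t x) x ∧
      HasDerivAt (fun y => Fx t y) (Fxx t x) x)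
    (c0 : ContinuousOn (fun q : ℝ × ℝ => F q.1 q.2) (Set.Ioi 0 ×ˢ (Set.univ : Set ℝ)))
    (c1 : ContinuousOn (fun q : ℝ × ℝ => Ft q.1 q.2) (Set.Ioi 0 ×ˢ (Set.univ : Set ℝ)))
    (c2 : ContinuousOn (fun q : ℝ × ℝ => Fx q.1 q.2) (Set.Ioi 0 ×ˢ (Set.univ : Set ℝ)))
    (c3 : ContinuousOn (fun q : ℝ × ℝ => Fxx q.1 q.2) (Set.Ioi 0 ×ˢ (Set.univ : Set ℝ)))
    (hpos : ∀ t : ℝ, 0 < t → ∀ x, 0 < Fx t x)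
    (hbot : ∀ t : ℝ, 0 < t → Tendsto (F t) atBot (𝓝 0))
    (htop : ∀ t : ℝ, 0 < t → Tendsto (F t) atTop (𝓝 1)) :
    ∃ I : ℝ → ℝ → ℝ, I = (fun t u => pinv (F t) u) ∧
    (∀ t : ℝ, 0 < t → ∀ u ∈ Set.Ioo (0:ℝ) 1, F t (I t u) = u ∧
        HasDerivAt (fun s => I s u) (- Ft t (I t u) / Fx t (I t u)) t ∧
        HasDerivAt (fun v => I t v) (1 / Fx t (I t u)) u ∧
        HasDerivAt (fun v => 1 / Fx t (I t v)) (-Fxx t (I t u) / (Fx t (I t u))^3) u ∧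
        HasDerivAt (fun v => Fx t (I t v)) (Fxx t (I t u) / Fx t (I t u)) u) ∧
      ContinuousOn (fun q : ℝ × ℝ => I q.1 q.2) (Set.Ioi 0 ×ˢ Set.Ioo 0 1) ∧
      ContinuousOn (fun q : ℝ × ℝ => - Ft q.1 (I q.1 q.2) / Fx q.1 (I q.1 q.2)) (Set.Ioi 0 ×ˢ Set.Ioo 0 1) ∧
      ContinuousOn (fun q : ℝ × ℝ => 1 / Fx q.1 (I q.1 q.2)) (Set.Ioi 0 ×ˢ Set.Ioo 0 1) ∧
      ContinuousOn (fun q : ℝ × ℝ => - Fxx q.1 (I q.1 q.2) / (Fx q.1 (I q.1 q.2))^3) (Set.Ioi 0 ×ˢ Set.Ioo 0 1) := by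
  have hsm : ∀ t : ℝ, 0 < t → StrictMono (F t) := fun t ht =>
    strictMono_of_deriv_pos (fun x => by
      have := (hd t ht x).2.1.deriv
      rw [show deriv (F t) x = Fx t x from this]; exact hpos t ht x)
  have hFc : ∀ t : ℝ, 0 < t → Continuous (F t) := fun t ht =>
    continuous_iff_continuousAt.2 fun x => (hd t ht x).2.1.continuousAt
  obtain ⟨I, hI⟩ : ∃ I : ℝ → ℝ → ℝ, I = (fun t u => pinv (F t) u) := ⟨_, rfl⟩
  have hpinv : ∀ t : ℝ, 0 < t → ∀ x, pinv (F t) (F t x) = x := by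
    intro t ht x
    have : {y : ℝ | F t x < F t y} = Ioi x := by
      ext y; exact (hsm t ht).lt_iff_lt
    rw [pinv, this, csInf_Ioi]
  have hFI : ∀ t : ℝ, 0 < t → ∀ u ∈ Ioo (0:ℝ) 1, F t (I t u) = u := by
    intro t ht u hu
    obtain ⟨x, hx⟩ : ∃ x, F t x = u := by
      obtain ⟨x1, h1⟩ := ((hbot t ht).eventually (gt_mem_nhds hu.1)).exists
      obtain ⟨x2, h2⟩ := ((htop t ht).eventually (lt_mem_nhds hu.2)).exists
      have := isPreconnected_univ.intermediate_value (mem_univ x1) (mem_univ x2) (hFc t ht).continuousOn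
        ⟨h1.le, h2.le⟩
      obtain ⟨x, -, hx⟩ := this
      exact ⟨x, hx⟩
    rw [hI]; dsimp only
    rw [← hx, hpinv t ht]
  have hnh : ∀ t : ℝ, 0 < t → ∀ x : ℝ, (Set.Ioi 0 ×ˢ (Set.univ : Set ℝ)) ∈ 𝓝 (t, x) := fun t ht x =>
    prod_mem_nhds (Ioi_mem_nhds ht) univ_mem
  have hIc : ∀ t : ℝ, 0 < t → ∀ u ∈ Ioo (0:ℝ) 1, ContinuousAt (fun q : ℝ × ℝ => I q.1 q.2) (t, u) := by
    intro t ht u hu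
    rw [ContinuousAt, tendsto_order]
    have hev : ∀ᶠ q : ℝ × ℝ in 𝓝 (t, u), 0 < q.1 ∧ q.2 ∈ Ioo (0:ℝ) 1 := by
      filter_upwards [prod_mem_nhds (Ioi_mem_nhds ht) (Ioo_mem_nhds hu.1 hu.2)] with q hq using hq
    have hF' : ∀ x, ContinuousAt (fun q : ℝ × ℝ => F q.1 x - q.2) (t, u) := by
      intro x
      have h1 : ContinuousAt (fun q : ℝ × ℝ => F q.1 q.2) (t, x) := c0.continuousAt (hnh t ht x)
      have h2 : ContinuousAt (fun q : ℝ × ℝ => F q.1 x) (t, u) :=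
        ContinuousAt.comp (f := fun q : ℝ × ℝ => (q.1, x)) (x := (t, u)) h1 (by fun_prop)
      exact h2.sub continuousAt_snd
    constructor
    · intro x hx
      have h0 : F t x - u < 0 := by
        have := hsm t ht hx
        dsimp only at this
        rw [hFI t ht u hu] at this; linarith
      filter_upwards [hev, (hF' x).eventually (gt_mem_nhds h0)] with q hq h
      rw [← (hsm q.1 hq.1).lt_iff_lt, hFI q.1 hq.1 q.2 hq.2]; linarith
    · intro x hx
      have h0 : 0 < F t x - u := by
        have := hsm t ht hx
        dsimp only at this
        rw [hFI t ht u hu] at this; linarith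
      filter_upwards [hev, (hF' x).eventually (lt_mem_nhds h0)] with q hq h
      rw [← (hsm q.1 hq.1).lt_iff_lt, hFI q.1 hq.1 q.2 hq.2]; linarith
  have hIco : ContinuousOn (fun q : ℝ × ℝ => I q.1 q.2) (Set.Ioi 0 ×ˢ Set.Ioo 0 1) :=
    fun q hq => (hIc q.1 hq.1 q.2 hq.2).continuousWithinAt
  have hpair : ContinuousOn (fun q : ℝ × ℝ => (q.1, I q.1 q.2)) (Set.Ioi 0 ×ˢ Set.Ioo 0 1) :=
    continuousOn_fst.prodMk hIco
  have hmaps : MapsTo (fun q : ℝ × ℝ => (q.1, I q.1 q.2)) (Set.Ioi 0 ×ˢ Set.Ioo 0 1)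
      (Set.Ioi 0 ×ˢ (Set.univ : Set ℝ)) := fun q hq => ⟨hq.1, trivial⟩
  have k1 := c1.comp hpair hmaps
  have k2 := c2.comp hpair hmaps
  have k3 := c3.comp hpair hmaps
  have hne : ∀ q ∈ (Set.Ioi (0:ℝ) ×ˢ Set.Ioo (0:ℝ) 1), Fx q.1 (I q.1 q.2) ≠ 0 :=
    fun q hq => (hpos q.1 hq.1 _).ne'
  refine ⟨I, hI, ?_, hIco, ?_, ?_, ?_⟩
  · intro t ht u hu
    have hp := hpos t ht (I t u)
    have hIu : ContinuousAt (fun v => I t v) u :=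
      ContinuousAt.comp (f := fun v : ℝ => (t, v)) (x := u) (hIc t ht u hu) (by fun_prop)
    have d1 : HasDerivAt (fun v => I t v) (1 / Fx t (I t u)) u := by
      rw [one_div]
      refine HasDerivAt.of_local_left_inverse hIu (hd t ht (I t u)).2.1 hp.ne' ?_
      filter_upwards [Ioo_mem_nhds hu.1 hu.2] with v hv using hFI t ht v hv
    have d2 : HasDerivAt (fun v => Fx t (I t v)) (Fxx t (I t u) / Fx t (I t u)) u := by
      have := (hd t ht (I t u)).2.2.comp u d1
      refine this.congr_deriv (by ring)
    refine ⟨hFI t ht u hu, ?_, d1, ?_, d2⟩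
    · skip
      have hIt : ContinuousAt (fun s => I s u) t :=
        ContinuousAt.comp (f := fun v : ℝ => (v, u)) (x := t) (hIc t ht u hu) (by fun_prop)
      have hmv : ∀ s : ℝ, ∃ ξ ∈ uIcc (I t u) (I s u), 0 < s →
          F s (I s u) - F s (I t u) = Fx s ξ * (I s u - I t u) := by
        intro s
        by_cases hs : 0 < s
        · rcases lt_trichotomy (I t u) (I s u) with h | h | h
          · obtain ⟨ξ, hξ, he⟩ := exists_hasDerivAt_eq_slope (F s) (Fx s) h (hFc s hs).continuousOn
              (fun x _ => (hd s hs x).2.1)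
            refine ⟨ξ, Icc_subset_uIcc (Ioo_subset_Icc_self hξ), fun _ => ?_⟩
            rw [he]; field_simp [sub_ne_zero.2 h.ne']
          · exact ⟨I t u, left_mem_uIcc, fun _ => by rw [h]; ring⟩
          · obtain ⟨ξ, hξ, he⟩ := exists_hasDerivAt_eq_slope (F s) (Fx s) h (hFc s hs).continuousOn
              (fun x _ => (hd s hs x).2.1)
            refine ⟨ξ, Icc_subset_uIcc' (Ioo_subset_Icc_self hξ), fun _ => ?_⟩
            rw [he]
            have : I t u - I s u ≠ 0 := sub_ne_zero.2 h.ne'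
            field_simp
            ring
        · exact ⟨I t u, left_mem_uIcc, fun h => absurd h hs⟩
      choose ξ hξ hξe using hmv
      have hξt : Tendsto ξ (𝓝 t) (𝓝 (I t u)) := by
        have h1 : Tendsto (fun s => I t u - |I s u - I t u|) (𝓝 t) (𝓝 (I t u)) := by
          have : ContinuousAt (fun s => I t u - |I s u - I t u|) t :=
            continuousAt_const.sub (hIt.sub continuousAt_const).abs
          simpa [ContinuousAt] using this
        have h2 : Tendsto (fun s => I t u + |I s u - I t u|) (𝓝 t) (𝓝 (I t u)) := by
          have : ContinuousAt (fun s => I t u + |I s u - I t u|) t :=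
            continuousAt_const.add (hIt.sub continuousAt_const).abs
          simpa [ContinuousAt] using this
        refine tendsto_of_tendsto_of_tendsto_of_le_of_le h1 h2 ?_ ?_
        · intro s
          have := abs_sub_left_of_mem_uIcc (hξ s)
          have := (abs_le.1 this).1
          dsimp only; linarith
        · intro s
          have := abs_sub_left_of_mem_uIcc (hξ s)
          have := (abs_le.1 this).2
          dsimp only; linarith
      have hFxt : Tendsto (fun s => Fx s (ξ s)) (𝓝 t) (𝓝 (Fx t (I t u))) := by
        have h1 : ContinuousAt (fun q : ℝ × ℝ => Fx q.1 q.2) (t, I t u) := c2.continuousAt (hnh t ht _)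
        exact h1.tendsto.comp (tendsto_id.prodMk_nhds hξt)
      rw [hasDerivAt_iff_tendsto_slope]
      have hsl := hasDerivAt_iff_tendsto_slope.1 (hd t ht (I t u)).1
      have := hsl.neg.div (hFxt.mono_left nhdsWithin_le_nhds) hp.ne'
      refine this.congr' ?_
      filter_upwards [self_mem_nhdsWithin, nhdsWithin_le_nhds (Ioi_mem_nhds ht)] with s hst hs
      have e := hξe s hs
      rw [hFI s hs u hu] at e
      have e2 := hFI t ht u hu
      have hp' := (hpos s hs (ξ s)).ne'
      simp only [Pi.div_apply, slope_def_field]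
      have hst' : s - t ≠ 0 := sub_ne_zero.2 hst
      rw [e2]
      field_simp
      linarith
    · have := (d2.fun_inv hp.ne')
      simp only [one_div]
      refine this.congr_deriv ?_
      field_simp
  · exact k1.neg.div k2 hne
  · exact continuousOn_const.div k2 hne
  · exact k3.neg.div (k2.pow 3) (fun q hq => pow_ne_zero 3 (hne q hq))
/-- Under (D3), (R1) and classical regularity with bounded space derivative, the
pseudo-inverse `(t,u) ↦ F_t⁻¹(u)` is `C^{1,2}` on `(0,∞) × (0,1)` and satisfies
`∂ₜ F_t⁻¹(u) = b(u) - (1/2) ∂_u (a(u) / ∂_u F_t⁻¹(u))`. -/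
theorem pseudo_inverse_evolution_equation
    (a b : ℝ → ℝ)
    (ha : ContinuousOn a (Set.Icc 0 1)) (hb : ContinuousOn b (Set.Icc 0 1))
    (ha0 : ∀ u ∈ Set.Icc (0:ℝ) 1, 0 ≤ a u)
    (hD3 : ∃ c > (0:ℝ), ∀ u ∈ Set.Icc (0:ℝ) 1, c ≤ a u)
    (hR1 : ContDiffOn ℝ 1 a (Set.Icc 0 1))
    (μ : Measure ℝ) [IsProbabilityMeasure μ] (hμ : Integrable (fun x => |x|) μ)
    (F : ℝ → ℝ → ℝ)
    (hF : IsWeakSolution (primitive a) (primitive b) (cdfOf μ) F) (hFmem : MemF F)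
    (hcl : HasClassicalRegularity a b F)
    (hbd : ∀ t₁ t₂ : ℝ, 0 < t₁ → t₁ < t₂ →
      ∃ M : ℝ, ∀ t ∈ Set.Icc t₁ t₂, ∀ x : ℝ, |deriv (fun y => F t y) x| ≤ M) :
    ∃ It Iu Iuu : ℝ → ℝ → ℝ,
      (∀ t : ℝ, 0 < t → ∀ u ∈ Set.Ioo (0:ℝ) 1,
        HasDerivAt (fun s => pinv (F s) u) (It t u) t ∧
        HasDerivAt (fun v => pinv (F t) v) (Iu t u) u ∧
        HasDerivAt (fun v => Iu t v) (Iuu t u) u) ∧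
      ContinuousOn (fun q : ℝ × ℝ => pinv (F q.1) q.2) (Set.Ioi 0 ×ˢ Set.Ioo 0 1) ∧
      ContinuousOn (fun q : ℝ × ℝ => It q.1 q.2) (Set.Ioi 0 ×ˢ Set.Ioo 0 1) ∧
      ContinuousOn (fun q : ℝ × ℝ => Iu q.1 q.2) (Set.Ioi 0 ×ˢ Set.Ioo 0 1) ∧
      ContinuousOn (fun q : ℝ × ℝ => Iuu q.1 q.2) (Set.Ioi 0 ×ˢ Set.Ioo 0 1) ∧
      (∀ t : ℝ, 0 < t → ∀ u ∈ Set.Ioo (0:ℝ) 1,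
        It t u = b u - (1/2) * deriv (fun v => a v / Iu t v) u) := by
  obtain ⟨P, -, -, -, hP⟩ := hFmem
  obtain ⟨Ft, Fx, Fxx, hd, c0, c1, c2, c3, hpde⟩ := hcl
  obtain ⟨c, hc, hca⟩ := hD3
  have hcdf : ∀ t : ℝ, 0 < t → F t = ProbabilityTheory.cdf (P t : Measure ℝ) := by
    intro t ht
    funext x
    rw [hP t ht.le, ProbabilityTheory.cdf_eq_real]; rfl
  have hmono : ∀ t : ℝ, 0 < t → Monotone (F t) := fun t ht => by
    rw [hcdf t ht]; exact ProbabilityTheory.monotone_cdf _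
  have hbot : ∀ t : ℝ, 0 < t → Tendsto (F t) atBot (𝓝 0) := fun t ht => by
    rw [hcdf t ht]; exact ProbabilityTheory.tendsto_cdf_atBot _
  have htop : ∀ t : ℝ, 0 < t → Tendsto (F t) atTop (𝓝 1) := fun t ht => by
    rw [hcdf t ht]; exact ProbabilityTheory.tendsto_cdf_atTop _
  have hI01 : ∀ t : ℝ, 0 < t → ∀ x, F t x ∈ Icc (0:ℝ) 1 := fun t ht x => by
    rw [hcdf t ht]
    exact ⟨ProbabilityTheory.cdf_nonneg _ _, ProbabilityTheory.cdf_le_one _ _⟩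
  have hpde' : ∀ t : ℝ, 0 < t → ∀ x, Ft t x = (1/2) * (derivWithin a (Icc 0 1) (F t x) * Fx t x * Fx t x
      + a (F t x) * Fxx t x) - b (F t x) * Fx t x := by
    intro t ht x
    rw [hpde t ht x, aux_nondiv a hR1 (F t) (Fx t) (Fxx t x) x (hI01 t ht)
      (fun y => (hd t ht y).2.1) (hd t ht x).2.2,
      aux_prim b hb (F t) (Fx t x) x (hI01 t ht) (hd t ht x).2.1]
  obtain ⟨Ca, hCa⟩ := isCompact_Icc.exists_bound_of_continuousOn ha
  obtain ⟨Cb, hCb⟩ := isCompact_Icc.exists_bound_of_continuousOn hb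
  obtain ⟨Cd, hCd⟩ := isCompact_Icc.exists_bound_of_continuousOn
    (hR1.continuousOn_derivWithin (uniqueDiffOn_Icc zero_lt_one) le_rfl)
  have hpos : ∀ t : ℝ, 0 < t → ∀ x, 0 < Fx t x := by
    intro t0 ht0 x0
    have ht1 : 0 < t0/2 := by linarith
    obtain ⟨M, hM⟩ := hbd (t0/2) t0 ht1 (by linarith)
    have htp : ∀ t ∈ Icc (t0/2) t0, 0 < t := fun t h => lt_of_lt_of_le ht1 h.1
    obtain ⟨r1, hr1⟩ := eventually_atBot.1 ((hbot (t0/2) ht1).eventually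
      (gt_mem_nhds (show (0:ℝ) < 1/3 by norm_num)))
    obtain ⟨r2, hr2⟩ := eventually_atTop.1 ((htop (t0/2) ht1).eventually
      (lt_mem_nhds (show (2/3:ℝ) < 1 by norm_num)))
    have hCd0 : 0 ≤ Cd := (norm_nonneg _).trans (hCd 0 ⟨le_rfl, zero_le_one⟩)
    refine aux_hopf F Ft Fx Fxx (fun t x => (1/2) * a (F t x))
      (fun t x => (1/2) * (derivWithin a (Icc 0 1) (F t x) * Fx t x) - b (F t x))
      (t0/2) t0 x0 (1 + |x0 - r1| + |x0 - r2| + 2) (c/2) (max Ca (Cd * M + Cb)) (1/3) (by linarith) ?_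
      (by linarith) (by norm_num) (fun t h => hd t (htp t h)) (c0.mono ?_) ?_ ?_ ?_ ?_ ?_
    · have := abs_nonneg (x0 - r1)
      have := abs_nonneg (x0 - r2)
      linarith
    · exact prod_mono (fun t h => htp t h) subset_rfl
    · intro t h x
      rw [hpde' t (htp t h) x]; ring
    · intro t h x
      have h1 := hca _ (hI01 t (htp t h) x)
      have h2 := hCa _ (hI01 t (htp t h) x)
      have h3 := ha0 _ (hI01 t (htp t h) x)
      rw [Real.norm_eq_abs, abs_of_nonneg h3] at h2
      refine ⟨by linarith, le_trans ?_ (le_max_left _ _)⟩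
      linarith
    · intro t h x
      refine le_trans ?_ (le_max_right _ _)
      have h1 := hCd _ (hI01 t (htp t h) x)
      have h2 := hCb _ (hI01 t (htp t h) x)
      have h3 := hM t h x
      rw [(hd t (htp t h) x).2.1.deriv] at h3
      rw [Real.norm_eq_abs] at h1 h2
      have h4 : |derivWithin a (Icc 0 1) (F t x) * Fx t x| ≤ Cd * M := by
        rw [abs_mul]
        exact mul_le_mul h1 h3 (abs_nonneg _) hCd0
      have h5 := abs_le.1 h4
      have h6 := abs_le.1 h2
      have h7 := (abs_nonneg _).trans h4
      rw [abs_le]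
      constructor <;> linarith
    · exact fun t h => hmono t (htp t h)
    · intro x y hx hy
      have e1 := hr1 y (by
        have := neg_abs_le (x0 - r1)
        have := le_abs_self (x0 - r1)
        have := abs_nonneg (x0 - r2)
        linarith)
      have e2 := hr2 x (by
        have := neg_abs_le (x0 - r2)
        have := abs_nonneg (x0 - r1)
        linarith)
      linarith
  obtain ⟨I, hI, hder, k0, k1, k2, k3⟩ := aux_inverse F Ft Fx Fxx hd c0 c1 c2 c3 hpos hbot htop
  subst hI
  refine ⟨_, _, _, fun t ht u hu => ⟨(hder t ht u hu).2.1, (hder t ht u hu).2.2.1,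
    (hder t ht u hu).2.2.2.1⟩, k0, k1, k2, k3, ?_⟩
  intro t ht u hu
  obtain ⟨hFI, -, -, -, d⟩ := hder t ht u hu
  have hp := hpos t ht (pinv (F t) u)
  have hda : HasDerivAt a (derivWithin a (Icc 0 1) u) u :=
    ((hR1.differentiableOn (by norm_num)) u (Ioo_subset_Icc_self hu)).hasDerivWithinAt.hasDerivAt
      (Icc_mem_nhds hu.1 hu.2)
  have hD := (hda.fun_mul d).deriv
  simp only [div_div_eq_mul_div, div_one]
  dsimp only at hD hFI
  rw [hD, hpde' t ht, hFI]
  field_simp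
  ring
end
end
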